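/- arXiv:1406.6084 — 11 statements merged into one kernel-verified Lean document; each statement's English description precedes it below -/
import Mathlib

section
/- Let U ⊆ ℝ be a nonempty compact set containing at least one nonpositive element and at least one nonnegative element, let g : ℝ → ℝ be continuous, and let S₀ > 0. Then the single-round upper hedging value equals the supremum of the expected payoff over all risk-neutral probability measures on U; that is, ⨅_{Δ ∈ ℝ} ⨆_{r ∈ U} (g(S₀·(1+r)) − r·Δ) = sup { ∫ g(S₀·(1+r)) dP(r) : P a risk-neutral probability measure on U }, and this supremum is attained by some risk-neutral probability measure on U. -/
/-!
Write `f r = g (S₀ * (1 + r))`. Weak duality (`integral_le_iSup_sub`) is the observation that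
subtracting `r * Δ` does not change the expectation of `f` under a mean-zero measure, so that this
expectation is at most `⨆ r : U, (f r - r * Δ)` for every `Δ`.

For strong duality, let `K ⊆ ℝ × ℝ` be the set of all pairs `(∫ r dQ, ∫ f dQ)`, with `Q` a
probability measure on `U`. It is convex (`convex_moments`), and it is compact, being the continuous
image of the weakly compact space of probability measures on `U` (Prokhorov). Since `U` meets both
half-lines, `K` meets the line `{0} × ℝ`, and it has a highest point `(0, V)` there. For `ε > 0`
the point `(0, V + ε)` is strictly separated from `K` by a linear functional
`(x, y) ↦ a * x + b * y`; comparison with `(0, V)` gives `0 < b`, and evaluation at the points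
`(r, f r)`, which come from Dirac masses, shows that `Δ = -a / b` is a hedge of cost at
most `V + ε`. Hence the hedging value is at most `V`, the expectation of `f` under a risk-neutral
measure, and weak duality gives the rest.
-/

open MeasureTheory

/-- Weak duality: no hedge costs less than the expected payoff under a risk-neutral measure. -/
lemma integral_le_iSup_sub {U : Set ℝ} (hcomp : IsCompact U) {f : ℝ → ℝ} (hf : Continuous f)
    {P : Measure ℝ} [IsProbabilityMeasure P] (hPU : P U = 1) (hmean : ∫ r, r ∂P = 0) (Δ : ℝ) :
    ∫ r, f r ∂P ≤ ⨆ r : U, (f r - (r : ℝ) * Δ) := by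
  have hae : ∀ᵐ r ∂P, r ∈ U := by
    rw [← prob_compl_eq_zero_iff hcomp.measurableSet] at hPU
    exact hPU
  have hint : ∀ h : ℝ → ℝ, Continuous h → Integrable h P := by
    intro h hh
    obtain ⟨C, hC⟩ := hcomp.exists_bound_of_continuousOn hh.continuousOn
    exact Integrable.of_bound hh.aestronglyMeasurable C (hae.mono hC)
  have hbdd : BddAbove (Set.range fun r : U => f r - (r : ℝ) * Δ) := by
    have := (hcomp.image (f := fun r => f r - r * Δ) (by fun_prop)).bddAbove
    rwa [Set.image_eq_range] at this
  have hid := hint (fun r => r * Δ) (by fun_prop)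
  have h1 : ∫ r, f r ∂P = ∫ r, (f r - r * Δ) ∂P := by
    rw [integral_sub (hint f hf) hid, integral_mul_const, hmean]
    ring
  rw [h1]
  calc ∫ r, (f r - r * Δ) ∂P ≤ ∫ _, (⨆ r : U, (f r - (r : ℝ) * Δ)) ∂P :=
        integral_mono_ae ((hint f hf).sub hid) (integrable_const _)
          (hae.mono fun r hr => le_ciSup hbdd (⟨r, hr⟩ : U))
    _ = _ := by simp

/-- The pair of moments `(∫ r dQ, ∫ f dQ)` of a probability measure `Q` on `U`. -/
noncomputable def moments (U : Set ℝ) (f : ℝ → ℝ) (Q : ProbabilityMeasure U) : ℝ × ℝ :=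
  (∫ r : U, (r : ℝ) ∂(Q : Measure U), ∫ r : U, f r ∂(Q : Measure U))

lemma continuous_moments {U : Set ℝ} [CompactSpace U] {f : ℝ → ℝ} (hf : Continuous f) :
    Continuous (moments U f) := by
  have key : ∀ h : C(U, ℝ),
      Continuous fun Q : ProbabilityMeasure U => ∫ r, h r ∂(Q : Measure U) := by
    intro h
    exact ProbabilityMeasure.continuous_integral_boundedContinuousFunction
      (BoundedContinuousFunction.mkOfCompact h)
  exact (key ⟨fun r => (r : ℝ), by fun_prop⟩).prodMk (key ⟨fun r => f r, by fun_prop⟩)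

lemma convex_moments {U : Set ℝ} [CompactSpace U] {f : ℝ → ℝ} (hf : Continuous f) :
    Convex ℝ (Set.range (moments U f)) := by
  rintro _ ⟨Q, rfl⟩ _ ⟨R, rfl⟩ a b ha hb hab
  let M : Measure U := ENNReal.ofReal a • (Q : Measure U) + ENNReal.ofReal b • (R : Measure U)
  have hM : IsProbabilityMeasure M := by
    constructor
    simp [M, ← ENNReal.ofReal_add ha hb, hab]
  have hint : ∀ h : U → ℝ, Continuous h → ∫ r, h r ∂M
      = a * ∫ r, h r ∂(Q : Measure U) + b * ∫ r, h r ∂(R : Measure U) := by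
    intro h hh
    have hi : ∀ μ : ProbabilityMeasure U, Integrable h (μ : Measure U) := fun μ =>
      hh.integrable_of_hasCompactSupport (HasCompactSupport.of_compactSpace h)
    rw [integral_add_measure ((hi Q).smul_measure ENNReal.ofReal_ne_top)
      ((hi R).smul_measure ENNReal.ofReal_ne_top), integral_smul_measure, integral_smul_measure,
      ENNReal.toReal_ofReal ha, ENNReal.toReal_ofReal hb, smul_eq_mul, smul_eq_mul]
  refine ⟨⟨M, hM⟩, Prod.ext ?_ ?_⟩
  · exact hint (fun r => (r : ℝ)) (by fun_prop)
  · exact hint (fun r => f r) (by fun_prop)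

lemma moments_dirac_mem {U : Set ℝ} {f : ℝ → ℝ} {r : ℝ} (hr : r ∈ U) :
    (r, f r) ∈ Set.range (moments U f) :=
  ⟨⟨Measure.dirac ⟨r, hr⟩, inferInstance⟩, by simp [moments]⟩

/-- The supporting-line step: if `(0, V)` is the highest point of the moment set above `0`, then
every `c > V` is the cost of some hedge. -/
lemma exists_hedge {U : Set ℝ} [CompactSpace U] {f : ℝ → ℝ} (hf : Continuous f) {V c : ℝ}
    (hV : (0, V) ∈ Set.range (moments U f))
    (hmax : ∀ y, (0, y) ∈ Set.range (moments U f) → y ≤ V) (hc : V < c) :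
    ∃ Δ : ℝ, ∀ r ∈ U, f r - r * Δ ≤ c := by
  have hclosed : IsClosed (Set.range (moments U f)) :=
    (isCompact_range (continuous_moments hf)).isClosed
  obtain ⟨L, u, hLK, hLc⟩ := geometric_hahn_banach_closed_point (convex_moments hf) hclosed
    (fun h => hc.not_ge (hmax c h))
  have hL : ∀ x y : ℝ, L (x, y) = x * L (1, 0) + y * L (0, 1) := by
    intro x y
    have : ((x, y) : ℝ × ℝ) = x • ((1, 0) : ℝ × ℝ) + y • ((0, 1) : ℝ × ℝ) := by simp
    rw [this, map_add, map_smul, map_smul, smul_eq_mul, smul_eq_mul]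
  have hVc := (hLK _ hV).trans hLc
  rw [hL, hL 0 c] at hVc
  have hb : 0 < L (0, 1) := by
    by_contra! h
    nlinarith
  refine ⟨-L (1, 0) / L (0, 1), fun r hr => ?_⟩
  have hrc := (hLK _ (moments_dirac_mem hr)).trans hLc
  rw [hL, hL 0 c] at hrc
  have : f r - r * (-L (1, 0) / L (0, 1)) = (r * L (1, 0) + f r * L (0, 1)) / L (0, 1) := by
    field_simp
    ring
  rw [this, div_le_iff₀ hb]
  linarith

theorem stmt_0 (U : Set ℝ) (hne : U.Nonempty) (hcomp : IsCompact U)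
    (hneg : ∃ r ∈ U, r ≤ 0) (hpos : ∃ r ∈ U, 0 ≤ r)
    (g : ℝ → ℝ) (hg : Continuous g) (S₀ : ℝ) (hS₀ : 0 < S₀) :
    IsGreatest
      {v : ℝ | ∃ P : Measure ℝ, IsProbabilityMeasure P ∧ P U = 1 ∧
        (∫ r, r ∂P) = 0 ∧ v = ∫ r, g (S₀ * (1 + r)) ∂P}
      (⨅ Δ : ℝ, ⨆ r : U, (g (S₀ * (1 + (r : ℝ))) - (r : ℝ) * Δ)) := by
  have hf : Continuous fun r : ℝ => g (S₀ * (1 + r)) := by fun_prop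
  generalize hfdef : (fun r : ℝ => g (S₀ * (1 + r))) = f at hf
  have hfr : ∀ r, g (S₀ * (1 + r)) = f r := fun r => congrFun hfdef r
  simp only [hfr]
  have : CompactSpace U := isCompact_iff_compactSpace.mp hcomp
  have : Nonempty U := hne.to_subtype
  have hK : IsCompact (Set.range (moments U f)) := isCompact_range (continuous_moments hf)
  -- The first moments form a convex set with elements on both sides of `0`.
  obtain ⟨p, hpK, hp0⟩ : (0 : ℝ) ∈ Prod.fst '' Set.range (moments U f) := by
    obtain ⟨a, haU, ha⟩ := hneg
    obtain ⟨b, hbU, hb⟩ := hpos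
    have hconv : Convex ℝ (Prod.fst '' Set.range (moments U f)) :=
      (convex_moments hf).linear_image (LinearMap.fst ℝ ℝ ℝ)
    exact hconv.ordConnected.out ⟨_, moments_dirac_mem haU, rfl⟩ ⟨_, moments_dirac_mem hbU, rfl⟩
      ⟨ha, hb⟩
  obtain ⟨q, ⟨hqK, hq0⟩, hqmax⟩ :=
    (hK.inter_right (isClosed_eq continuous_fst continuous_const)).exists_isMaxOn
      (⟨p, hpK, hp0⟩ : (Set.range (moments U f) ∩ {x : ℝ × ℝ | x.1 = 0}).Nonempty)
      continuous_snd.continuousOn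
  obtain ⟨x, V⟩ := q
  obtain rfl : x = 0 := hq0
  have hmax : ∀ y, (0, y) ∈ Set.range (moments U f) → y ≤ V := fun y hy => hqmax ⟨hy, rfl⟩
  obtain ⟨Q, hQ⟩ := hqK
  obtain ⟨hQ1, hQ2⟩ := Prod.mk.inj hQ
  have hemb : MeasurableEmbedding (Subtype.val : U → ℝ) :=
    MeasurableEmbedding.subtype_coe hcomp.measurableSet
  let P : Measure ℝ := (Q : Measure U).map Subtype.val
  have hP : IsProbabilityMeasure P :=
    Measure.isProbabilityMeasure_map measurable_subtype_coe.aemeasurable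
  have hPU : P U = 1 := by simp [P, hemb.map_apply]
  have hP1 : ∫ r, r ∂P = 0 := by rw [hemb.integral_map]; exact hQ1
  have hP2 : ∫ r, f r ∂P = V := by rw [hemb.integral_map]; exact hQ2
  have hle : (⨅ Δ : ℝ, ⨆ r : U, (f r - (r : ℝ) * Δ)) ≤ V := by
    refine le_of_forall_gt_imp_ge_of_dense fun c hc => ?_
    obtain ⟨Δ, hΔ⟩ := exists_hedge hf ⟨Q, hQ⟩ hmax hc
    have hbdd : BddBelow (Set.range fun Δ : ℝ => ⨆ r : U, (f r - (r : ℝ) * Δ)) :=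
      ⟨_, Set.forall_mem_range.mpr fun Δ => integral_le_iSup_sub hcomp hf hPU hP1 Δ⟩
    exact (ciInf_le hbdd Δ).trans (ciSup_le fun r => hΔ r r.2)
  refine ⟨⟨P, hP, hPU, hP1, le_antisymm (hP2 ▸ hle) ?_⟩, ?_⟩
  · exact le_ciInf fun Δ => integral_le_iSup_sub hcomp hf hPU hP1 Δ
  · rintro _ ⟨R, hR, hRU, hR1, rfl⟩
    exact le_ciInf fun Δ => integral_le_iSup_sub hcomp hf hRU hR1 Δ
end

section
/- Let U ⊆ ℝ be a nonempty compact set containing at least one nonpositive element and at least one nonnegative element, let g : ℝ → ℝ be continuous, and let S₀ > 0. Then the single-round lower hedging value equals the infimum of the expected payoff over all risk-neutral probability measures on U; that is, ⨆_{Δ ∈ ℝ} ⨅_{r ∈ U} (g(S₀·(1+r)) − r·Δ) = inf { ∫ g(S₀·(1+r)) dP(r) : P a risk-neutral probability measure on U }, and this infimum is attained by some risk-neutral probability measure on U. -/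
/-!
Write `f r = g (S₀ * (1 + r))` and let `K` (`momentSet`) be the set of pairs of expectations
`(∫ r ∂P, ∫ f ∂P)` over all probability measures `P` carried by `U`. It is a convex subset of the
plane containing the graph of `f` over `U`, and it is compact because the probability measures on a
compact space are weakly compact. It meets the vertical axis because `U` has points on both sides
of `0`. Let `(0, m)` be the lowest such point; it comes from a risk-neutral measure with expected
payoff `m`.

Weak duality (`iInf_le_integral`): integrating `f r - r * Δ` against a risk-neutral measure bounds each
hedging value by each expected payoff, in particular by `m`. Conversely, for `c < m` the point
`(0, c)` lies outside the compact convex set `K`, so a linear functional strictly separates them.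
Since `(0, m) ∈ K` lies directly above `(0, c)`, the separating line is not vertical, and its slope
is a hedge `Δ` whose value is at least `c` (`exists_hedge`).
-/

open MeasureTheory

lemma integrable_of_continuous_of_compact {U : Set ℝ} (hU : IsCompact U) {P : Measure ℝ}
    [IsProbabilityMeasure P] (hP : P U = 1) {f : ℝ → ℝ} (hf : Continuous f) : Integrable f P := by
  have h : ∀ᵐ r ∂P, r ∈ U := (mem_ae_iff_prob_eq_one hU.measurableSet).2 hP
  have := hf.continuousOn.integrableOn_compact (μ := P) hU
  rwa [IntegrableOn, Measure.restrict_eq_self_of_ae_mem h] at this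

/-- The set of pairs of expectations `(∫ r ∂P, ∫ f ∂P)`, where `P` ranges over all probability
measures carried by `U`, risk-neutral or not. -/
def momentSet (U : Set ℝ) (f : ℝ → ℝ) : Set (ℝ × ℝ) :=
  {p | ∃ P : Measure ℝ, IsProbabilityMeasure P ∧ P U = 1 ∧
    (∫ r, r ∂P) = p.1 ∧ (∫ r, f r ∂P) = p.2}

/-- Dirac masses put the graph of `f` over `U` inside the moment set. -/
lemma graph_mem_momentSet {U : Set ℝ} (f : ℝ → ℝ) {r : ℝ} (hr : r ∈ U) :
    (r, f r) ∈ momentSet U f :=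
  ⟨Measure.dirac r, inferInstance, by simp [hr], by simp, by simp⟩

lemma convex_momentSet {U : Set ℝ} (hU : IsCompact U) {f : ℝ → ℝ} (hf : Continuous f) :
    Convex ℝ (momentSet U f) := by
  rintro x ⟨P, hP, hPU, hP1, hP2⟩ y ⟨Q, hQ, hQU, hQ1, hQ2⟩ a b ha hb hab
  have hmass : ENNReal.ofReal a + ENNReal.ofReal b = 1 := by
    rw [← ENNReal.ofReal_add ha hb, hab, ENNReal.ofReal_one]
  have key : ∀ h : ℝ → ℝ, Continuous h →
      ∫ r, h r ∂(ENNReal.ofReal a • P + ENNReal.ofReal b • Q)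
        = a * ∫ r, h r ∂P + b * ∫ r, h r ∂Q := by
    intro h hh
    rw [integral_add_measure
      ((integrable_of_continuous_of_compact hU hPU hh).smul_measure ENNReal.ofReal_ne_top)
      ((integrable_of_continuous_of_compact hU hQU hh).smul_measure ENNReal.ofReal_ne_top),
      integral_smul_measure, integral_smul_measure, ENNReal.toReal_ofReal ha,
      ENNReal.toReal_ofReal hb, smul_eq_mul, smul_eq_mul]
  refine ⟨ENNReal.ofReal a • P + ENNReal.ofReal b • Q, ⟨by simp [hmass]⟩,
    by simp [hPU, hQU, hmass], ?_, ?_⟩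
  · rw [key _ continuous_id', hP1, hQ1]; simp
  · rw [key _ hf, hP2, hQ2]; simp

/-- The moment set is the image of the space of probability measures on the compact space `U`,
which is weakly compact, under a weakly continuous map. -/
lemma isCompact_momentSet {U : Set ℝ} (hU : IsCompact U) {f : ℝ → ℝ} (hf : Continuous f) :
    IsCompact (momentSet U f) := by
  have : CompactSpace U := isCompact_iff_compactSpace.mp hU
  have hcont : ∀ h : ℝ → ℝ, Continuous h →
      Continuous fun μ : ProbabilityMeasure U => ∫ r : U, h r ∂(μ : Measure U) := by
    intro h hh
    refine continuous_iff_continuousAt.2 fun μ => ?_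
    exact ProbabilityMeasure.tendsto_iff_forall_integral_tendsto.1 Filter.tendsto_id
      (BoundedContinuousFunction.mkOfCompact ⟨fun r : U => h r, by fun_prop⟩)
  have hrange : momentSet U f = Set.range fun μ : ProbabilityMeasure U =>
      (∫ r : U, (r : ℝ) ∂(μ : Measure U), ∫ r : U, f r ∂(μ : Measure U)) := by
    have hemb := MeasurableEmbedding.subtype_coe hU.measurableSet
    apply Set.Subset.antisymm
    · rintro ⟨x, y⟩ ⟨P, hP, hPU, hx, hy⟩
      have hres : P.restrict U = P :=
        Measure.restrict_eq_self_of_ae_mem ((mem_ae_iff_prob_eq_one hU.measurableSet).2 hPU)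
      have hprob : IsProbabilityMeasure (P.comap ((↑) : U → ℝ)) :=
        ⟨by rw [hemb.comap_apply]; simpa using hPU⟩
      refine ⟨⟨P.comap (↑), hprob⟩, Prod.ext ?_ ?_⟩
      · simpa [integral_subtype_comap hU.measurableSet (fun r : ℝ => r), hres] using hx
      · simpa [integral_subtype_comap hU.measurableSet f, hres] using hy
    · rintro _ ⟨μ, rfl⟩
      refine ⟨(μ : Measure U).map (↑), Measure.isProbabilityMeasure_map hemb.measurable.aemeasurable,
        ?_, hemb.integral_map _, hemb.integral_map _⟩
      rw [hemb.map_apply]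
      simp
  rw [hrange]
  exact isCompact_range ((hcont _ continuous_id').prodMk (hcont f hf))

/-- Weak duality between a hedge `Δ` and a risk-neutral measure `P`. -/
lemma iInf_le_integral {U : Set ℝ} (hU : IsCompact U) {f : ℝ → ℝ} (hf : Continuous f)
    {P : Measure ℝ} [IsProbabilityMeasure P] (hPU : P U = 1) (hP0 : (∫ r, r ∂P) = 0) (Δ : ℝ) :
    (⨅ r : U, (f r - (r : ℝ) * Δ)) ≤ ∫ r, f r ∂P := by
  have hbdd : BddBelow (Set.range fun r : U => f r - (r : ℝ) * Δ) := by
    have := hU.bddBelow_image (f := fun r => f r - r * Δ) (by fun_prop)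
    rwa [Set.image_eq_range] at this
  have hid := integrable_of_continuous_of_compact hU hPU continuous_id'
  have hfi := integrable_of_continuous_of_compact hU hPU hf
  have hae : ∀ᵐ r ∂P, r ∈ U := (mem_ae_iff_prob_eq_one hU.measurableSet).2 hPU
  calc (⨅ r : U, (f r - (r : ℝ) * Δ))
      = ∫ _, (⨅ r : U, (f r - (r : ℝ) * Δ)) ∂P := by simp
    _ ≤ ∫ r, (f r - r * Δ) ∂P := by
        refine integral_mono_ae (integrable_const _) (hfi.sub (hid.mul_const Δ)) ?_
        filter_upwards [hae] with r hr
        exact ciInf_le hbdd ⟨r, hr⟩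
    _ = ∫ r, f r ∂P := by
        rw [integral_sub hfi (hid.mul_const Δ), integral_mul_const, hP0, zero_mul, sub_zero]

/-- If a closed convex set `K` containing the graph contains `(0, m)` but not the lower point
`(0, c)`, then a line through `(0, c)` lies below the whole graph; its slope is the hedge. -/
lemma exists_hedge_s1 {U : Set ℝ} {f : ℝ → ℝ}
    {K : Set (ℝ × ℝ)} (hKconv : Convex ℝ K) (hK : IsClosed K) (hgraph : ∀ r ∈ U, (r, f r) ∈ K)
    {m c : ℝ} (hm : ((0 : ℝ), m) ∈ K) (hcm : c < m) (hc : ((0 : ℝ), c) ∉ K) :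
    ∃ Δ : ℝ, ∀ r ∈ U, c ≤ f r - r * Δ := by
  obtain ⟨φ, u, hφc, hφ⟩ := geometric_hahn_banach_point_closed hKconv hK hc
  have hlin : ∀ x y : ℝ, φ (x, y) = x * φ (1, 0) + y * φ (0, 1) := by
    intro x y
    rw [← smul_eq_mul, ← smul_eq_mul, ← map_smul, ← map_smul, ← map_add]
    simp
  have h1 := hφ _ hm
  rw [hlin] at h1 hφc
  have hb : 0 < φ (0, 1) := by
    by_contra! hb
    nlinarith
  refine ⟨-(φ (1, 0) / φ (0, 1)), fun r hr => ?_⟩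
  have h2 := hφ _ (hgraph r hr)
  rw [hlin] at h2
  have h3 : φ (1, 0) / φ (0, 1) * φ (0, 1) = φ (1, 0) := div_mul_cancel₀ _ hb.ne'
  refine le_of_mul_le_mul_right ?_ hb
  linear_combination hφc + h2 - r * h3

theorem stmt_1 (U : Set ℝ) (hne : U.Nonempty) (hcomp : IsCompact U)
    (hneg : ∃ r ∈ U, r ≤ 0) (hpos : ∃ r ∈ U, 0 ≤ r)
    (g : ℝ → ℝ) (hg : Continuous g) (S₀ : ℝ) (hS₀ : 0 < S₀) :
    IsLeast
      {v : ℝ | ∃ P : Measure ℝ, IsProbabilityMeasure P ∧ P U = 1 ∧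
        (∫ r, r ∂P) = 0 ∧ v = ∫ r, g (S₀ * (1 + r)) ∂P}
      (⨆ Δ : ℝ, ⨅ r : U, (g (S₀ * (1 + (r : ℝ))) - (r : ℝ) * Δ)) := by
  have : Nonempty U := hne.to_subtype
  have hf : Continuous fun r => g (S₀ * (1 + r)) := by fun_prop
  generalize hfdef : (fun r => g (S₀ * (1 + r))) = f at hf
  have hfr : ∀ r, g (S₀ * (1 + r)) = f r := fun r => congrFun hfdef r
  simp only [hfr]
  have hK := isCompact_momentSet hcomp hf
  have hKconv := convex_momentSet hcomp hf
  -- The projection of the moment set to the first axis is an interval meeting both half-lines.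
  obtain ⟨p₀, hp₀, hp₀0⟩ : (0 : ℝ) ∈ Prod.fst '' momentSet U f := by
    obtain ⟨r₁, hr₁, h₁⟩ := hneg
    obtain ⟨r₂, hr₂, h₂⟩ := hpos
    have hconv : Convex ℝ (Prod.fst '' momentSet U f) :=
      hKconv.linear_image (LinearMap.fst ℝ ℝ ℝ)
    have hmem : ∀ r ∈ U, r ∈ Prod.fst '' momentSet U f := fun r hr =>
      ⟨(r, f r), graph_mem_momentSet f hr, rfl⟩
    exact hconv.ordConnected.out (hmem _ hr₁) (hmem _ hr₂) ⟨h₁, h₂⟩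
  obtain ⟨⟨x, m⟩, ⟨hmK, hx⟩, hmin⟩ := (hK.inter_right
    (isClosed_eq continuous_fst continuous_const : IsClosed {p : ℝ × ℝ | p.1 = 0})).exists_isMinOn
    ⟨p₀, hp₀, hp₀0⟩ continuous_snd.continuousOn
  obtain rfl : x = 0 := hx
  obtain ⟨P, hP, hPU, hP0, hPm⟩ := hmK
  simp only at hP0 hPm
  have hle : ∀ Δ : ℝ, (⨅ r : U, (f r - (r : ℝ) * Δ)) ≤ m := fun Δ =>
    hPm ▸ iInf_le_integral hcomp hf hPU hP0 Δ
  have heq : (⨆ Δ : ℝ, ⨅ r : U, (f r - (r : ℝ) * Δ)) = m := by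
    refine le_antisymm (ciSup_le hle) (le_of_forall_lt_imp_le_of_dense fun c hcm => ?_)
    obtain ⟨Δ, hΔ⟩ := exists_hedge_s1 hKconv hK.isClosed
      (fun r hr => graph_mem_momentSet f hr) ⟨P, hP, hPU, hP0, hPm⟩ hcm
      fun hc => (hmin ⟨hc, rfl⟩ : m ≤ c).not_gt hcm
    exact le_ciSup_of_le ⟨m, Set.forall_mem_range.2 hle⟩ Δ (le_ciInf fun r => hΔ r r.2)
  refine ⟨⟨P, hP, hPU, hP0, heq.trans hPm.symm⟩, ?_⟩
  rintro v ⟨Q, hQ, hQU, hQ0, rfl⟩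
  exact ciSup_le fun Δ => iInf_le_integral hcomp hf hQU hQ0 Δ
end

section
/- Let U ⊆ ℝ be a nonempty compact set containing at least one nonpositive element and at least one nonnegative element, let g : ℝ → ℝ be continuous, and let S₀ > 0. Then the supremum over risk-neutral probability measures on U of ∫ g(S₀·(1+r)) dP(r) is attained by a risk-neutral probability measure supported on at most two points r⁽¹⁾, r⁽²⁾ ∈ U with r⁽¹⁾ ≤ 0 ≤ r⁽²⁾. -/
/-!
Put `h r = g (S₀ * (1 + r))`. The triples `(a, b, t)` with `a, b ∈ U`, `a ≤ 0 ≤ b`, `t ∈ [0, 1]` and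
`(1 - t) * a + t * b = 0` form a nonempty compact set, on which `(1 - t) * h a + t * h b` attains its
maximum `M`. The two-point measure given by a maximizing triple is the required `P`.

It remains to bound `∫ h ∂Q` by `M` for every risk-neutral `Q` on `U`. If `U` contains points strictly
on both sides of `0`, maximality of `M` says that the slope `(h b - M) / b` is at most `(h a - M) / a`
for all `a < 0 < b` in `U`, so a number `Δ` separates the two families of slopes
(`exists_hedge`). Then `h r ≤ M + Δ * r` on `U`, and integrating against `Q` gives the bound. If `U`
lies on one side of `0`, such a `Δ` need not exist, but then `Q` is concentrated at `0`
(`ae_eq_zero_of_nonneg`), where `h 0 ≤ M`.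
-/

open MeasureTheory

/-- The measure with mass `1 - t` at `a` and mass `t` at `b`; it is a probability measure
for `t ∈ [0, 1]`. -/
noncomputable def twoPoint (a b t : ℝ) : Measure ℝ :=
  ENNReal.ofReal (1 - t) • Measure.dirac a + ENNReal.ofReal t • Measure.dirac b

lemma twoPoint_apply_of_mem {a b t : ℝ} (ht0 : 0 ≤ t) (ht1 : t ≤ 1) {s : Set ℝ}
    (ha : a ∈ s) (hb : b ∈ s) : twoPoint a b t s = 1 := by
  simp only [twoPoint, Measure.add_apply, Measure.smul_apply, smul_eq_mul,
    Measure.dirac_apply_of_mem ha, Measure.dirac_apply_of_mem hb, mul_one]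
  rw [← ENNReal.ofReal_add (by linarith) ht0]
  simp

lemma integral_twoPoint {a b t : ℝ} (ht0 : 0 ≤ t) (ht1 : t ≤ 1) (F : ℝ → ℝ) :
    ∫ r, F r ∂(twoPoint a b t) = (1 - t) * F a + t * F b := by
  have hi (c s : ℝ) : Integrable F (ENNReal.ofReal s • Measure.dirac c) :=
    (integrable_dirac (by simp)).smul_measure ENNReal.ofReal_ne_top
  rw [twoPoint, integral_add_measure (hi _ _) (hi _ _), integral_smul_measure,
    integral_smul_measure, integral_dirac, integral_dirac, ENNReal.toReal_ofReal (by linarith),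
    ENNReal.toReal_ofReal ht0, smul_eq_mul, smul_eq_mul]

/-- If the two-point expectation of `h` under every risk-neutral pair is at most `M`, and `U` has
points strictly on both sides of `0`, then some linear hedge superreplicates `h` from capital `M`. -/
lemma exists_hedge_s4 {U : Set ℝ} {h : ℝ → ℝ} {M : ℝ}
    (hn : ∃ r ∈ U, r < 0) (hp : ∃ r ∈ U, 0 < r) (h0 : (0 : ℝ) ∈ U → h 0 ≤ M)
    (hM : ∀ a ∈ U, ∀ b ∈ U, a < 0 → 0 < b → b * h a - a * h b ≤ M * (b - a)) :
    ∃ Δ : ℝ, ∀ r ∈ U, h r ≤ M + Δ * r := by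
  obtain ⟨a₀, ha₀, ha₀'⟩ := hn
  obtain ⟨b₀, hb₀, hb₀'⟩ := hp
  obtain ⟨Δ, hΔ₁, hΔ₂⟩ := exists_between_of_forall_le
    (s := (fun b => (h b - M) / b) '' {b | b ∈ U ∧ 0 < b})
    (t := (fun a => (h a - M) / a) '' {a | a ∈ U ∧ a < 0})
    ⟨_, b₀, ⟨hb₀, hb₀'⟩, rfl⟩ ⟨_, a₀, ⟨ha₀, ha₀'⟩, rfl⟩ (by
      rintro _ ⟨b, ⟨hb, hb'⟩, rfl⟩ _ ⟨a, ⟨ha, ha'⟩, rfl⟩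
      have := hM a ha b hb ha' hb'
      change (h b - M) / b ≤ (h a - M) / a
      rw [← neg_div_neg_eq (h a - M) a, div_le_div_iff₀ hb' (by linarith)]
      linarith)
  refine ⟨Δ, fun r hr => ?_⟩
  rcases lt_trichotomy r 0 with hr' | rfl | hr'
  · have := hΔ₂ ⟨r, ⟨hr, hr'⟩, rfl⟩
    rw [le_div_iff_of_neg hr'] at this
    linarith
  · simpa using h0 hr
  · have := hΔ₁ ⟨r, ⟨hr, hr'⟩, rfl⟩
    rw [div_le_iff₀ hr'] at this
    linarith

/-- A mean-zero measure carried by one closed half-line (`ε > 0`: nonnegative reals, `ε < 0`: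
nonpositive reals) is concentrated at `0`. -/
lemma ae_eq_zero_of_nonneg {Q : Measure ℝ} (hi : Integrable (fun r : ℝ => r) Q)
    (h0 : ∫ r, r ∂Q = 0) (ε : ℝ) (hε : ε ≠ 0) (hs : ∀ᵐ r ∂Q, 0 ≤ ε * r) : ∀ᵐ r ∂Q, r = 0 := by
  have := (integral_eq_zero_iff_of_nonneg_ae hs (hi.const_mul ε)).1
    (by rw [integral_const_mul, h0, mul_zero])
  filter_upwards [this] with r hr
  simpa [hε] using hr

theorem stmt_4 (U : Set ℝ) (hne : U.Nonempty) (hcomp : IsCompact U)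
    (hneg : ∃ r ∈ U, r ≤ 0) (hpos : ∃ r ∈ U, 0 ≤ r)
    (g : ℝ → ℝ) (hg : Continuous g) (S₀ : ℝ) (hS₀ : 0 < S₀) :
    ∃ r₁ r₂ : ℝ, r₁ ∈ U ∧ r₂ ∈ U ∧ r₁ ≤ 0 ∧ 0 ≤ r₂ ∧
      ∃ P : Measure ℝ, IsProbabilityMeasure P ∧ P U = 1 ∧ (∫ r, r ∂P) = 0 ∧
        P ({r₁, r₂} : Set ℝ)ᶜ = 0 ∧
        IsGreatest
          {v : ℝ | ∃ Q : Measure ℝ, IsProbabilityMeasure Q ∧ Q U = 1 ∧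
            (∫ r, r ∂Q) = 0 ∧ v = ∫ r, g (S₀ * (1 + r)) ∂Q}
          (∫ r, g (S₀ * (1 + r)) ∂P) := by
  have hh : Continuous fun r : ℝ => g (S₀ * (1 + r)) := by fun_prop
  generalize (fun r : ℝ => g (S₀ * (1 + r))) = h at hh ⊢
  -- For `a < 0 < b` the mean-zero weight on `b` is `-a / (b - a)`.
  have hw {a b : ℝ} (ha : a ≤ 0) (hb : 0 ≤ b) (hab : a < b) :
      -a / (b - a) ∈ Set.Icc (0 : ℝ) 1 ∧
        (1 - -a / (b - a)) * a + -a / (b - a) * b = 0 := by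
    have hba : 0 < b - a := by linarith
    refine ⟨⟨div_nonneg (by linarith) hba.le, (div_le_one hba).2 (by linarith)⟩, ?_⟩
    field_simp
    ring
  let K : Set (ℝ × ℝ × ℝ) := (U ×ˢ U ×ˢ Set.Icc (0 : ℝ) 1) ∩
    {p | p.1 ≤ 0 ∧ 0 ≤ p.2.1 ∧ (1 - p.2.2) * p.1 + p.2.2 * p.2.1 = 0}
  have hK : IsCompact K := by
    refine (hcomp.prod (hcomp.prod isCompact_Icc)).inter_right ?_
    simp only [Set.ofPred_and]
    exact (isClosed_le (by fun_prop) (by fun_prop)).inter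
      ((isClosed_le (by fun_prop) (by fun_prop)).inter (isClosed_eq (by fun_prop) (by fun_prop)))
  have hKne : K.Nonempty := by
    obtain ⟨a, ha, ha'⟩ := hneg
    obtain ⟨b, hb, hb'⟩ := hpos
    rcases (ha'.trans hb').lt_or_eq with hab | rfl
    · exact ⟨(a, b, -a / (b - a)), ⟨ha, hb, (hw ha' hb' hab).1⟩, ha', hb', (hw ha' hb' hab).2⟩
    · exact ⟨(a, a, 0), ⟨ha, ha, by simp⟩, ha', hb', by simp; linarith⟩
  obtain ⟨⟨a, b, t⟩, ⟨⟨ha, hb, ht0, ht1⟩, ha', hb', hmean⟩, hmax⟩ :=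
    hK.exists_isMaxOn hKne
      (f := fun p => (1 - p.2.2) * h p.1 + p.2.2 * h p.2.1) (by fun_prop)
  dsimp only at ha hb ht0 ht1 ha' hb' hmean
  have hP : IsProbabilityMeasure (twoPoint a b t) :=
    ⟨twoPoint_apply_of_mem ht0 ht1 (Set.mem_univ _) (Set.mem_univ _)⟩
  have hPU : twoPoint a b t U = 1 := twoPoint_apply_of_mem ht0 ht1 ha hb
  have hP0 : ∫ r, r ∂(twoPoint a b t) = 0 := by
    rw [integral_twoPoint ht0 ht1 (fun r => r), hmean]
  refine ⟨a, b, ha, hb, ha', hb', twoPoint a b t, hP, hPU, hP0, ?_,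
    ⟨_, hP, hPU, hP0, rfl⟩, ?_⟩
  · rw [prob_compl_eq_zero_iff (Set.toFinite _).measurableSet]
    exact twoPoint_apply_of_mem ht0 ht1 (by simp) (by simp)
  rintro _ ⟨Q, hQ, hQU, hQ0, rfl⟩
  rw [integral_twoPoint ht0 ht1 h]
  set M : ℝ := (1 - t) * h a + t * h b with hMdef
  have hM {a' b' t' : ℝ} (hp : (a', b', t') ∈ K) : (1 - t') * h a' + t' * h b' ≤ M := hmax hp
  have hM0 : (0 : ℝ) ∈ U → h 0 ≤ M := fun h0 => by
    simpa using hM (a' := 0) (b' := 0) (t' := 0) ⟨⟨h0, h0, by simp⟩, by simp⟩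
  have hQae : ∀ᵐ r ∂Q, r ∈ U := (prob_compl_eq_zero_iff hcomp.measurableSet).2 hQU
  have hint {F : ℝ → ℝ} (hF : Continuous F) : Integrable F Q := by
    obtain ⟨C, hC⟩ := hcomp.exists_bound_of_continuousOn hF.continuousOn
    exact Integrable.of_bound hF.aestronglyMeasurable C (hQae.mono hC)
  have hid : Integrable (fun r : ℝ => r) Q := hint continuous_id
  -- A measure concentrated at `0` charges `U` only if `0 ∈ U`.
  have hdeg (hz : ∀ᵐ r ∂Q, r = 0) : ∫ r, h r ∂Q ≤ M := by
    have hle : ∀ᵐ r ∂Q, h r ≤ M := by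
      filter_upwards [hz, hQae] with r hr hrU
      subst hr
      exact hM0 hrU
    simpa using integral_mono_ae (hint hh) (integrable_const M) hle
  by_cases hn : ∃ r ∈ U, r < 0
  · by_cases hp : ∃ r ∈ U, 0 < r
    · obtain ⟨Δ, hΔ⟩ := exists_hedge_s4 hn hp hM0 (fun a ha b hb ha' hb' => by
        obtain ⟨hw1, hw2⟩ := hw ha'.le hb'.le (ha'.trans hb')
        have := hM (a' := a) (b' := b) (t' := -a / (b - a)) ⟨⟨ha, hb, hw1⟩, ha'.le, hb'.le, hw2⟩
        have hba : 0 < b - a := by linarith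
        have key : b * h a - a * h b
            = ((1 - -a / (b - a)) * h a + -a / (b - a) * h b) * (b - a) := by
          field_simp
          ring
        rw [key]
        gcongr)
      calc ∫ r, h r ∂Q ≤ ∫ r, (M + Δ * r) ∂Q :=
            integral_mono_ae (hint hh) (hint (by fun_prop)) (hQae.mono hΔ)
        _ = M := by
            rw [integral_add (integrable_const M) (hid.const_mul Δ), integral_const_mul, hQ0]
            simp
    · push Not at hp
      exact hdeg (ae_eq_zero_of_nonneg hid hQ0 (-1) (by norm_num)
        (hQae.mono fun r hr => by linarith [hp r hr]))
  · push Not at hn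
    exact hdeg (ae_eq_zero_of_nonneg hid hQ0 1 one_ne_zero
      (hQae.mono fun r hr => by linarith [hn r hr]))
end

section
/- Let 0 < ζ̲ < 1 and ζ̄ > 0, let g : ℝ → ℝ be convex and continuous, let S₀ > 0, and let τ ≥ 1. Define value functions by g_τ(x) = g(x) and, for t = τ, τ−1, …, 1, g_{t−1}(x) = ⨅_{Δ ∈ ℝ} ⨆_{r ∈ [−ζ̲, ζ̄]} (g_t(x·(1+r)) − r·Δ). Then g₀(S₀) = Σ_{k=0}^{τ} (τ choose k) · (ζ̲/(ζ̲+ζ̄))^k · (ζ̄/(ζ̲+ζ̄))^{τ−k} · g(S₀·(1+ζ̄)^k·(1−ζ̲)^{τ−k}); that is, the τ-round upper hedging value equals the expectation of g(S₀·∏_{t=1}^{τ}(1+R_t)) when R₁, …, R_τ are i.i.d. with P(R_t = −ζ̲) = ζ̄/(ζ̲+ζ̄) and P(R_t = ζ̄) = ζ̲/(ζ̲+ζ̄). -/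
/-!
For a convex function `F`, the one-step problem `⨅ Δ, ⨆ r, F (x * (1 + r)) - r * Δ` is solved by the
chord slope: with `Δ` the slope of the chord of `r ↦ F (x * (1 + r))` over `[-a, b]`, convexity bounds
every `F (x * (1 + r)) - r * Δ` by the value of the chord at `r = 0`, while for an arbitrary `Δ` the
mean-zero average of the two endpoint terms, which is independent of `Δ`, is a lower bound for the
supremum. Hence one step is the averaging operator `F ↦ (b F(x(1-a)) + a F(x(1+b))) / (a+b)`
(`hedge_step`). This operator preserves convexity (`convexOn_average`), so it can be iterated, and
Pascal's rule turns its `n`-th iterate into the binomial sum (`binomVal_succ`).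
-/

/-- The one-step hedging value of a convex `F` is its expectation under the mean-zero measure on
`{-a, b}`. -/
lemma hedge_step (a b : ℝ) (ha : 0 < a) (hb : 0 < b) (F : ℝ → ℝ) (hF : ConvexOn ℝ Set.univ F)
    (x : ℝ) :
    (⨅ Δ : ℝ, ⨆ r : Set.Icc (-a) b, (F (x * (1 + (r : ℝ))) - (r : ℝ) * Δ)) =
      b / (a + b) * F (x * (1 - a)) + a / (a + b) * F (x * (1 + b)) := by
  have hab : 0 < a + b := by positivity
  have hne : a + b ≠ 0 := hab.ne'
  -- the point at parameter `r` is a convex combination of the two endpoints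
  have hchord : ∀ Δ : ℝ, ∀ r ∈ Set.Icc (-a) b, F (x * (1 + r)) - r * Δ ≤
      (b - r) / (a + b) * (F (x * (1 - a)) + a * Δ) +
        (r + a) / (a + b) * (F (x * (1 + b)) - b * Δ) := by
    rintro Δ r ⟨h1, h2⟩
    have hl : 0 ≤ (b - r) / (a + b) := div_nonneg (by linarith) hab.le
    have hr : 0 ≤ (r + a) / (a + b) := div_nonneg (by linarith) hab.le
    have h := hF.2 (Set.mem_univ (x * (1 - a))) (Set.mem_univ (x * (1 + b))) hl hr
      (by field_simp; ring)
    have e : (b - r) / (a + b) * (x * (1 - a)) + (r + a) / (a + b) * (x * (1 + b))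
        = x * (1 + r) := by field_simp; ring
    simp only [smul_eq_mul, e] at h
    have e' : (b - r) / (a + b) * (a * Δ) - (r + a) / (a + b) * (b * Δ) = -(r * Δ) := by
      field_simp; ring
    linarith
  have hbdd : ∀ Δ : ℝ, BddAbove (Set.range fun r : Set.Icc (-a) b =>
      F (x * (1 + (r : ℝ))) - (r : ℝ) * Δ) := by
    intro Δ
    refine ⟨max (F (x * (1 - a)) + a * Δ) (F (x * (1 + b)) - b * Δ), ?_⟩
    rintro _ ⟨⟨r, hr⟩, rfl⟩
    refine (hchord Δ r hr).trans ?_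
    obtain ⟨h1, h2⟩ := hr
    set M := max (F (x * (1 - a)) + a * Δ) (F (x * (1 + b)) - b * Δ) with hM
    have hl : 0 ≤ (b - r) / (a + b) := div_nonneg (by linarith) hab.le
    have hr : 0 ≤ (r + a) / (a + b) := div_nonneg (by linarith) hab.le
    have k1 := mul_le_mul_of_nonneg_left (le_max_left _ _ : F (x * (1 - a)) + a * Δ ≤ M) hl
    have k2 := mul_le_mul_of_nonneg_left (le_max_right _ _ : F (x * (1 + b)) - b * Δ ≤ M) hr
    have e : (b - r) / (a + b) * M + (r + a) / (a + b) * M = M := by field_simp; ring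
    linarith
  have hlow : ∀ Δ : ℝ, b / (a + b) * F (x * (1 - a)) + a / (a + b) * F (x * (1 + b)) ≤
      ⨆ r : Set.Icc (-a) b, (F (x * (1 + (r : ℝ))) - (r : ℝ) * Δ) := by
    intro Δ
    have hL := le_ciSup (hbdd Δ) ⟨-a, le_rfl, by linarith⟩
    have hR := le_ciSup (hbdd Δ) ⟨b, by linarith, le_rfl⟩
    simp only [← sub_eq_add_neg] at hL hR
    set M := ⨆ r : Set.Icc (-a) b, (F (x * (1 + (r : ℝ))) - (r : ℝ) * Δ)
    have h1 := mul_le_mul_of_nonneg_left hL (div_nonneg hb.le hab.le)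
    have h2 := mul_le_mul_of_nonneg_left hR (div_nonneg ha.le hab.le)
    have e1 : b / (a + b) * M + a / (a + b) * M = M := by field_simp; ring
    have e2 : b / (a + b) * (-a * Δ) + a / (a + b) * (b * Δ) = 0 := by field_simp; ring
    linarith
  apply le_antisymm
  · refine (ciInf_le ⟨_, by rintro _ ⟨Δ, rfl⟩; exact hlow Δ⟩
      ((F (x * (1 + b)) - F (x * (1 - a))) / (a + b))).trans ?_
    have : Nonempty (Set.Icc (-a) b) := ⟨⟨0, by linarith, hb.le⟩⟩
    refine ciSup_le ?_
    rintro ⟨r, hr⟩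
    refine (hchord _ r hr).trans (le_of_eq ?_)
    field_simp
    ring
  · exact le_ciInf hlow

lemma convexOn_average (p q c d : ℝ) (hp : 0 ≤ p) (hq : 0 ≤ q) (F : ℝ → ℝ)
    (hF : ConvexOn ℝ Set.univ F) :
    ConvexOn ℝ Set.univ fun x => q * F (x * d) + p * F (x * c) := by
  have h : ∀ e : ℝ, ConvexOn ℝ Set.univ fun x => F (x * e) := fun e => by
    simpa [Function.comp_def] using hF.comp_linearMap (LinearMap.mulRight ℝ e)
  exact ((h d).smul hq).add ((h c).smul hp)

/-- The expectation of `g (x * c ^ K * d ^ (n - K))` for `K` binomial with weights `p` (for `c`) and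
`q` (for `d`), indexed by the antidiagonal so as to avoid truncated subtraction. -/
noncomputable def binomVal (p q c d : ℝ) (g : ℝ → ℝ) (n : ℕ) (x : ℝ) : ℝ :=
  ∑ ij ∈ Finset.HasAntidiagonal.antidiagonal n,
    (n.choose ij.1 : ℝ) * (p ^ ij.1 * q ^ ij.2 * g (x * c ^ ij.1 * d ^ ij.2))

lemma binomVal_succ (p q c d : ℝ) (g : ℝ → ℝ) (n : ℕ) (x : ℝ) :
    binomVal p q c d g (n + 1) x =
      q * binomVal p q c d g n (x * d) + p * binomVal p q c d g n (x * c) := by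
  unfold binomVal
  rw [Finset.sum_antidiagonal_choose_succ_mul
    (fun i j => p ^ i * q ^ j * g (x * c ^ i * d ^ j)) n, Finset.mul_sum, Finset.mul_sum]
  congr 1
  · refine Finset.sum_congr rfl fun ij _ => ?_
    rw [show x * d * c ^ ij.1 * d ^ ij.2 = x * c ^ ij.1 * d ^ (ij.2 + 1) by ring]
    ring
  · refine Finset.sum_congr rfl fun ij hij => ?_
    rw [show x * c * c ^ ij.1 * d ^ ij.2 = x * c ^ (ij.1 + 1) * d ^ ij.2 by ring,
      ← Nat.choose_symm_of_eq_add (Finset.HasAntidiagonal.mem_antidiagonal.1 hij).symm]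
    ring

theorem stmt_5 (ζd ζu : ℝ) (hζd0 : 0 < ζd) (hζd1 : ζd < 1) (hζu : 0 < ζu)
    (g : ℝ → ℝ) (hconv : ConvexOn ℝ Set.univ g) (hcont : Continuous g)
    (S₀ : ℝ) (hS₀ : 0 < S₀) (τ : ℕ) (hτ : 1 ≤ τ)
    (G : ℕ → ℝ → ℝ) (hGτ : ∀ x, G τ x = g x)
    (hrec : ∀ t < τ, ∀ x, G t x =
      ⨅ Δ : ℝ, ⨆ r : Set.Icc (-ζd) ζu, (G (t + 1) (x * (1 + (r : ℝ))) - (r : ℝ) * Δ)) :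
    G 0 S₀ = ∑ k ∈ Finset.range (τ + 1),
      (τ.choose k : ℝ) * (ζd / (ζd + ζu)) ^ k * (ζu / (ζd + ζu)) ^ (τ - k) *
        g (S₀ * (1 + ζu) ^ k * (1 - ζd) ^ (τ - k)) := by
  have key : ∀ n ≤ τ, ConvexOn ℝ Set.univ (G (τ - n)) ∧
      ∀ x, G (τ - n) x =
        binomVal (ζd / (ζd + ζu)) (ζu / (ζd + ζu)) (1 + ζu) (1 - ζd) g n x := by
    intro n
    induction n with
    | zero =>
      intro _
      refine ⟨?_, fun x => by simp [binomVal, hGτ]⟩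
      rwa [Nat.sub_zero, show G τ = g from funext hGτ]
    | succ n ih =>
      intro hn
      obtain ⟨hc, hv⟩ := ih (by omega)
      have hstep : ∀ x, G (τ - (n + 1)) x = ζu / (ζd + ζu) * G (τ - n) (x * (1 - ζd)) +
          ζd / (ζd + ζu) * G (τ - n) (x * (1 + ζu)) := fun x => by
        rw [hrec _ (by omega) x, show τ - (n + 1) + 1 = τ - n by omega]
        exact hedge_step ζd ζu hζd0 hζu _ hc x
      refine ⟨?_, fun x => by rw [hstep, binomVal_succ, hv, hv]⟩
      rw [show G (τ - (n + 1)) = _ from funext hstep]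
      exact convexOn_average _ _ _ _ (by positivity) (by positivity) _ hc
  have h := (key τ le_rfl).2 S₀
  rw [Nat.sub_self] at h
  rw [h, binomVal, Finset.Nat.sum_antidiagonal_eq_sum_range_succ_mk]
  exact Finset.sum_congr rfl fun k _ => by ring
end

section
/- Let g : ℝ → ℝ be Lipschitz continuous and convex, let S₀ > 0 and ν > 0. For each τ ≥ 1 let ζ̲ᵗ_τ, ζ̄ᵗ_τ > 0 for t = 1, …, τ with ζ̲ᵗ_τ < 1, and suppose Σ_{t=1}^{τ} ζ̲ᵗ_τ·ζ̄ᵗ_τ → ν and sup_{1≤t≤τ} max(ζ̲ᵗ_τ, ζ̄ᵗ_τ) → 0 as τ → ∞. For each τ let R₁^τ, …, R_τ^τ be independent random variables with P(R_t^τ = −ζ̲ᵗ_τ) = ζ̄ᵗ_τ/(ζ̲ᵗ_τ+ζ̄ᵗ_τ) and P(R_t^τ = ζ̄ᵗ_τ) = ζ̲ᵗ_τ/(ζ̲ᵗ_τ+ζ̄ᵗ_τ). Then E[g(S₀·∏_{t=1}^{τ}(1+R_t^τ))] converges, as τ → ∞, to ∫ g(S₀·exp(√ν·z − ν/2)) dγ(z),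 where γ is the standard Gaussian measure on ℝ. -/
/-!
The law of the log-return `∑ t, log (1 + R t)` converges weakly to the Gaussian `N(-ν/2, ν)`, by
Lévy's continuity theorem: a mean-zero two-point return has variance `ζd * ζu`, so a second-order
Taylor expansion gives `E[(1 + R) ^ (i y)] = exp (c ζd ζu) + O(ε ζd ζu)` with
`c = (-y ^ 2 - i y) / 2` and `ε` the size of the largest jump (`CRR.one_period_bound`). The errors
add up to `O(ε ν)` over the periods (`CRR.charFun_bound`), so the characteristic functions tend
to `exp (c ν)`.

The payoff `x ↦ g (S₀ * exp x)` is unbounded, so weak convergence is complemented by uniform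
integrability: `g` has linear growth, and the second moment of the gross return is
`∏ t, (1 + ζd ζu) ≤ exp (∑ t, ζd ζu)`, which stays bounded. Truncation then passes to the limit
(`CRR.tendsto_integral_of_sq_bounded`).
-/

open Filter

open MeasureTheory ProbabilityTheory Complex

namespace CRR

/-! ### Expectations over independent two-point returns -/

/-- The law of the log-return `∑ t, log (1 + R t)`, where the `R t` are independent and `R t`
takes the values `u t` and `-d t` with the mean-zero probabilities `d t / (d t + u t)` and
`u t / (d t + u t)`. It is written as a finite sum of point masses over the paths `s`, with
`s t = true` standing for an up-move at time `t`. -/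
noncomputable def logReturnLaw {n : ℕ} (d u : Fin n → ℝ) : Measure ℝ :=
  ∑ s : Fin n → Bool,
    ENNReal.ofReal (∏ t, if s t then d t / (d t + u t) else u t / (d t + u t)) •
      Measure.dirac (∑ t, if s t then Real.log (1 + u t) else Real.log (1 - d t))

section Law

variable {n : ℕ} {d u : Fin n → ℝ}

lemma weight_nonneg (hd : ∀ t, 0 < d t) (hu : ∀ t, 0 < u t) (s : Fin n → Bool) :
    0 ≤ ∏ t, if s t then d t / (d t + u t) else u t / (d t + u t) := by
  refine Finset.prod_nonneg fun t _ ↦ ?_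
  have := hd t
  have := hu t
  split_ifs <;> positivity

lemma integrable_logReturnLaw {E : Type*} [NormedAddCommGroup E] (d u : Fin n → ℝ) (f : ℝ → E) :
    Integrable f (logReturnLaw d u) := by
  rw [logReturnLaw, integrable_finsetSum_measure]
  exact fun s _ ↦ (integrable_dirac (by simp)).smul_measure (by simp)

lemma integral_logReturnLaw {E : Type*} [NormedAddCommGroup E] [NormedSpace ℝ E] [CompleteSpace E]
    (hd : ∀ t, 0 < d t) (hu : ∀ t, 0 < u t) (f : ℝ → E) :
    ∫ x, f x ∂(logReturnLaw d u) = ∑ s : Fin n → Bool,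
      (∏ t, if s t then d t / (d t + u t) else u t / (d t + u t)) •
        f (∑ t, if s t then Real.log (1 + u t) else Real.log (1 - d t)) := by
  rw [logReturnLaw, integral_finsetSum_measure
    fun s _ ↦ (integrable_dirac (by simp)).smul_measure (by simp)]
  refine Finset.sum_congr rfl fun s _ ↦ ?_
  rw [integral_smul_measure, integral_dirac, ENNReal.toReal_ofReal (weight_nonneg hd hu s)]

lemma sum_prod_bool {R : Type*} [CommSemiring R] (a b : Fin n → R) :
    ∑ s : Fin n → Bool, ∏ t, (if s t then a t else b t) = ∏ t, (a t + b t) := by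
  have h := Finset.prod_univ_sum (fun _ : Fin n ↦ (Finset.univ : Finset Bool))
    (fun t c ↦ if c then a t else b t)
  rw [Fintype.piFinset_univ] at h
  simpa using h.symm

lemma isProbabilityMeasure_logReturnLaw (hd : ∀ t, 0 < d t) (hu : ∀ t, 0 < u t) :
    IsProbabilityMeasure (logReturnLaw d u) := by
  refine ⟨?_⟩
  simp only [logReturnLaw, Measure.coe_finsetSum, Finset.sum_apply, Measure.smul_apply,
    measure_univ, smul_eq_mul, mul_one]
  rw [← ENNReal.ofReal_sum_of_nonneg fun s _ ↦ weight_nonneg hd hu s, sum_prod_bool,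
    Finset.prod_eq_one, ENNReal.ofReal_one]
  intro t _
  have := hd t
  have := hu t
  field_simp

/-- Exponential moments of the log-return factor over the independent periods. -/
lemma integral_cexp_logReturnLaw (hd : ∀ t, 0 < d t) (hu : ∀ t, 0 < u t) (z : ℂ) :
    ∫ x : ℝ, cexp (z * x) ∂(logReturnLaw d u) =
      ∏ t, (((d t / (d t + u t) : ℝ) : ℂ) * cexp (z * (Real.log (1 + u t) : ℝ)) +
        ((u t / (d t + u t) : ℝ) : ℂ) * cexp (z * (Real.log (1 - d t) : ℝ))) := by
  rw [integral_logReturnLaw hd hu, ← sum_prod_bool]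
  refine Finset.sum_congr rfl fun s _ ↦ ?_
  rw [Complex.real_smul, ofReal_prod, ofReal_sum, Finset.mul_sum, Complex.exp_sum,
    ← Finset.prod_mul_distrib]
  refine Finset.prod_congr rfl fun t _ ↦ ?_
  split_ifs <;> rfl

/-- The second moment of the gross return `∏ t, (1 + R t)`. -/
lemma integral_exp_two_mul_logReturnLaw (hd : ∀ t, 0 < d t) (hd1 : ∀ t, d t < 1)
    (hu : ∀ t, 0 < u t) :
    ∫ x : ℝ, Real.exp (2 * x) ∂(logReturnLaw d u) = ∏ t, (1 + d t * u t) := by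
  rw [integral_logReturnLaw hd hu]
  have key : ∀ t, 1 + d t * u t = d t / (d t + u t) * Real.exp (2 * Real.log (1 + u t)) +
      u t / (d t + u t) * Real.exp (2 * Real.log (1 - d t)) := by
    intro t
    have h1 := hd t
    have h2 := hu t
    have h3 := hd1 t
    rw [two_mul, Real.exp_add, Real.exp_log (by linarith), two_mul, Real.exp_add,
      Real.exp_log (by linarith)]
    field_simp
    ring
  rw [Finset.prod_congr rfl fun t _ ↦ key t, ← sum_prod_bool]
  refine Finset.sum_congr rfl fun s _ ↦ ?_
  rw [smul_eq_mul, Finset.mul_sum, Real.exp_sum, ← Finset.prod_mul_distrib]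
  refine Finset.prod_congr rfl fun t _ ↦ ?_
  split_ifs <;> rfl

end Law

/-! ### Characteristic function asymptotics -/

/-- The coefficient `c` with `E[(1 + R) ^ (i y)] = 1 + c E[R²] + O(E|R|³)` for mean-zero `R`;
also `exp (c ν)` is the characteristic function at `y` of the Gaussian `N(-ν/2, ν)`. -/
noncomputable def charCoeff (y : ℝ) : ℂ := (-(y : ℂ) ^ 2 - y * I) / 2

lemma charCoeff_re (y : ℝ) : (charCoeff y).re = -y ^ 2 / 2 := by
  have : charCoeff y = ((-y ^ 2 / 2 : ℝ) : ℂ) + ((-y / 2 : ℝ) : ℂ) * I := by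
    simp only [charCoeff]; push_cast; ring
  rw [this, add_re, ofReal_re, re_ofReal_mul, I_re, mul_zero, add_zero]

/-- Second-order Taylor bound for `x ↦ (1 + x) ^ (i y)` at `0`. -/
lemma taylor_bound (y x : ℝ) (hx : |x| ≤ 1 / 2) (hyx : 2 * |y| * |x| ≤ 1) :
    ‖cexp (y * I * (Real.log (1 + x) : ℝ)) - (1 + y * I * x + charCoeff y * x ^ 2)‖ ≤
      (8 * |y| ^ 3 + 2 * |y| + 3 * y ^ 2) * |x| ^ 3 := by
  set l := Real.log (1 + x) with hl
  have hx0 := abs_nonneg x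
  have hy0 := abs_nonneg y
  have h1 : |l - x + x ^ 2 / 2| ≤ 2 * |x| ^ 3 := by
    have h := Real.abs_log_sub_add_sum_range_le (x := -x) (by rw [abs_neg]; linarith) 2
    simp only [Finset.sum_range_succ, Finset.sum_range_zero, abs_neg, sub_neg_eq_add] at h
    norm_num at h
    have e : l - x + x ^ 2 / 2 = -x + x ^ 2 / 2 + Real.log (1 + x) := by rw [hl]; ring
    rw [e]
    refine h.trans ?_
    rw [div_le_iff₀ (by linarith)]
    have : 0 ≤ |x| ^ 3 := by positivity
    nlinarith
  have hsq : |x| ^ 3 ≤ x ^ 2 / 2 := by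
    rw [← sq_abs x]; nlinarith [sq_nonneg |x|]
  have h2 : |l - x| ≤ 2 * x ^ 2 := by
    rw [abs_le] at h1 ⊢
    constructor <;> nlinarith [sq_nonneg x]
  have hxx : x ^ 2 ≤ |x| / 2 := by rw [← sq_abs x]; nlinarith
  have h3 : |l| ≤ 2 * |x| := by
    have := abs_add_le (l - x) x
    rw [sub_add_cancel] at this
    linarith
  have h4 : |l ^ 2 - x ^ 2| ≤ 6 * |x| ^ 3 := by
    have e : l ^ 2 - x ^ 2 = (l - x) * (l + x) := by ring
    have h5 : |l + x| ≤ 3 * |x| := (abs_add_le l x).trans (by linarith)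
    rw [e, abs_mul]
    calc |l - x| * |l + x| ≤ (2 * x ^ 2) * (3 * |x|) := by gcongr
      _ = 6 * |x| ^ 3 := by rw [← sq_abs x]; ring
  set z : ℂ := y * I * (l : ℝ) with hz
  have hzn : ‖z‖ = |y| * |l| := by simp [hz]
  have hz2 : ‖z‖ ≤ 2 * |y| * |x| := by rw [hzn]; nlinarith
  have h6 : ‖cexp z - (1 + z + z ^ 2 / 2)‖ ≤ 8 * |y| ^ 3 * |x| ^ 3 := by
    have h := Complex.exp_bound (x := z) (hz2.trans hyx) (n := 3) (by norm_num)
    simp only [Finset.sum_range_succ, Finset.sum_range_zero] at h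
    norm_num [Nat.factorial] at h
    refine h.trans ?_
    calc ‖z‖ ^ 3 * (2 / 9) ≤ (2 * |y| * |x|) ^ 3 * 1 := by gcongr; norm_num
      _ = _ := by ring
  have e : cexp z - (1 + y * I * x + charCoeff y * x ^ 2) =
      (cexp z - (1 + z + z ^ 2 / 2)) + y * I * ((l - x + x ^ 2 / 2 : ℝ) : ℂ) +
        ((-y ^ 2 / 2 : ℝ) : ℂ) * ((l ^ 2 - x ^ 2 : ℝ) : ℂ) := by
    simp only [hz, charCoeff]
    push_cast
    ring_nf
    simp only [I_sq]
    ring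
  rw [e]
  refine (norm_add₃_le).trans ?_
  have n1 : ‖(y : ℂ) * I * ((l - x + x ^ 2 / 2 : ℝ) : ℂ)‖ ≤ |y| * (2 * |x| ^ 3) := by
    rw [norm_mul, norm_mul, norm_I, norm_real, norm_real, mul_one, Real.norm_eq_abs,
      Real.norm_eq_abs]
    gcongr
  have n2 : ‖((-y ^ 2 / 2 : ℝ) : ℂ) * ((l ^ 2 - x ^ 2 : ℝ) : ℂ)‖ ≤ y ^ 2 / 2 * (6 * |x| ^ 3) := by
    rw [norm_mul, norm_real, norm_real, Real.norm_eq_abs, Real.norm_eq_abs]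
    gcongr
    rw [abs_div, abs_neg, abs_of_nonneg (sq_nonneg y)]
    norm_num
  linarith

/-- One period: the characteristic function of `log (1 + R)` at `y` agrees with
`exp (c E[R²])` up to `O(ε E[R²])`, where `E[R²] = d * u` and `|R| ≤ ε`. -/
lemma one_period_bound (y : ℝ) {d u ε : ℝ} (hd : 0 < d) (hu : 0 < u) (hdε : d ≤ ε) (huε : u ≤ ε)
    (hε : ε ≤ 1 / 2) (hyε : 2 * |y| * ε ≤ 1) (hcε : ‖charCoeff y‖ * ε ≤ 1) :
    ‖(((d / (d + u) : ℝ) : ℂ) * cexp (y * I * (Real.log (1 + u) : ℝ)) +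
        ((u / (d + u) : ℝ) : ℂ) * cexp (y * I * (Real.log (1 - d) : ℝ))) -
      cexp (charCoeff y * (d * u : ℝ))‖ ≤
      ((8 * |y| ^ 3 + 2 * |y| + 3 * y ^ 2) + ‖charCoeff y‖ ^ 2) * ε * (d * u) := by
  have hε0 : 0 < ε := hd.trans_le hdε
  set K := 8 * |y| ^ 3 + 2 * |y| + 3 * y ^ 2 with hK
  have hK0 : 0 ≤ K := by positivity
  set c := charCoeff y with hc
  set p := d / (d + u) with hp
  set q := u / (d + u) with hq
  have hp0 : 0 ≤ p := by positivity
  have hq0 : 0 ≤ q := by positivity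
  have hpq : p + q = 1 := by rw [hp, hq]; field_simp
  have hmean : p * u - q * d = 0 := by rw [hp, hq]; field_simp; ring
  have hvar : p * u ^ 2 + q * d ^ 2 = d * u := by rw [hp, hq]; field_simp; ring
  have t1 := taylor_bound y u (by rw [abs_of_pos hu]; linarith)
    (by rw [abs_of_pos hu]; exact (by gcongr : 2 * |y| * u ≤ 2 * |y| * ε).trans hyε)
  have t2 := taylor_bound y (-d) (by rw [abs_neg, abs_of_pos hd]; linarith)
    (by rw [abs_neg, abs_of_pos hd]; exact (by gcongr : 2 * |y| * d ≤ 2 * |y| * ε).trans hyε)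
  rw [abs_of_pos hu] at t1
  rw [abs_neg, abs_of_pos hd, ← sub_eq_add_neg] at t2
  have hdu : d * u ≤ ε := by nlinarith
  have hcn : ‖c * ((d * u : ℝ) : ℂ)‖ = ‖c‖ * (d * u) := by
    rw [norm_mul, norm_real, Real.norm_of_nonneg (by positivity)]
  have t3 := Complex.norm_exp_sub_one_sub_id_le (x := c * ((d * u : ℝ) : ℂ)) (by
    rw [hcn]
    exact (by gcongr : ‖c‖ * (d * u) ≤ ‖c‖ * ε).trans hcε)
  rw [hcn] at t3
  set A := cexp (y * I * (Real.log (1 + u) : ℝ))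
  set B := cexp (y * I * (Real.log (1 - d) : ℝ))
  set D := cexp (c * ((d * u : ℝ) : ℂ))
  have e : (p : ℂ) * A + q * B - D =
      (p : ℂ) * (A - (1 + y * I * u + c * u ^ 2)) +
      (q : ℂ) * (B - (1 + y * I * (-d : ℝ) + c * (-d : ℝ) ^ 2)) +
      -(D - 1 - c * ((d * u : ℝ) : ℂ)) := by
    have a1 : (p : ℂ) + q = 1 := by exact_mod_cast hpq
    have a2 : (p : ℂ) * u - q * d = 0 := by exact_mod_cast hmean
    have a3 : (p : ℂ) * u ^ 2 + q * d ^ 2 = d * u := by exact_mod_cast hvar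
    push_cast
    linear_combination a1 + y * I * a2 + c * a3
  rw [e]
  refine (norm_add₃_le).trans ?_
  rw [norm_neg, norm_mul, norm_mul, norm_real, norm_real, Real.norm_of_nonneg hp0,
    Real.norm_of_nonneg hq0]
  have b1 : p * ‖A - (1 + y * I * u + c * u ^ 2)‖ ≤ p * (K * (ε * u ^ 2)) := by
    gcongr
    refine t1.trans ?_
    gcongr
    nlinarith [sq_nonneg u]
  have b2 : q * ‖B - (1 + y * I * (-d : ℝ) + c * (-d : ℝ) ^ 2)‖ ≤ q * (K * (ε * d ^ 2)) := by
    gcongr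
    refine t2.trans ?_
    gcongr
    nlinarith [sq_nonneg d]
  have b3 : (‖c‖ * (d * u)) ^ 2 ≤ ‖c‖ ^ 2 * ε * (d * u) := by
    have : 0 ≤ ‖c‖ ^ 2 * (d * u) := by positivity
    nlinarith
  have b4 : p * (K * (ε * u ^ 2)) + q * (K * (ε * d ^ 2)) = K * ε * (d * u) := by
    rw [← hvar]; ring
  linarith

lemma norm_prod_sub_prod_le {ι : Type*} (s : Finset ι) (a b : ι → ℂ) (ha : ∀ i ∈ s, ‖a i‖ ≤ 1)
    (hb : ∀ i ∈ s, ‖b i‖ ≤ 1) :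
    ‖∏ i ∈ s, a i - ∏ i ∈ s, b i‖ ≤ ∑ i ∈ s, ‖a i - b i‖ := by
  induction s using Finset.cons_induction with
  | empty => simp
  | cons i s hi ih =>
    rw [Finset.prod_cons, Finset.prod_cons, Finset.sum_cons]
    have hb' : ‖∏ j ∈ s, b j‖ ≤ 1 := by
      rw [norm_prod]
      exact Finset.prod_le_one (fun _ _ ↦ norm_nonneg _)
        fun j hj ↦ hb j (Finset.mem_cons_of_mem hj)
    have ih' := ih (fun j hj ↦ ha j (Finset.mem_cons_of_mem hj))
      fun j hj ↦ hb j (Finset.mem_cons_of_mem hj)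
    have e : a i * ∏ j ∈ s, a j - b i * ∏ j ∈ s, b j =
        a i * (∏ j ∈ s, a j - ∏ j ∈ s, b j) + (a i - b i) * ∏ j ∈ s, b j := by ring
    rw [e]
    refine (norm_add_le _ _).trans ?_
    rw [norm_mul, norm_mul]
    have := mul_le_of_le_one_left (norm_nonneg (∏ j ∈ s, a j - ∏ j ∈ s, b j))
      (ha i (Finset.mem_cons_self i s))
    have := mul_le_of_le_one_right (norm_nonneg (a i - b i)) hb'
    linarith

/-- The characteristic function of the whole log-return, compared with the exponential. Both
factors of each period have modulus at most one, so the one-period errors add up. -/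
lemma charFun_bound {n : ℕ} {d u : Fin n → ℝ} (y : ℝ) {ε : ℝ} (hd : ∀ t, 0 < d t)
    (hu : ∀ t, 0 < u t) (hmax : ∀ t, max (d t) (u t) < ε)
    (hε : ε ≤ 1 / 2) (hyε : 2 * |y| * ε ≤ 1) (hcε : ‖charCoeff y‖ * ε ≤ 1) :
    ‖charFun (logReturnLaw d u) y - cexp (charCoeff y * (∑ t, d t * u t : ℝ))‖ ≤
      ((8 * |y| ^ 3 + 2 * |y| + 3 * y ^ 2) + ‖charCoeff y‖ ^ 2) * ε * ∑ t, d t * u t := by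
  have e1 : charFun (logReturnLaw d u) y = ∫ x : ℝ, cexp (y * I * x) ∂(logReturnLaw d u) := by
    rw [charFun_apply_real]
    refine integral_congr_ae (.of_forall fun x ↦ ?_)
    change cexp _ = cexp _
    ring_nf
  rw [e1, integral_cexp_logReturnLaw hd hu, ofReal_sum, Finset.mul_sum, Complex.exp_sum,
    Finset.mul_sum]
  refine (norm_prod_sub_prod_le _ _ _ ?_ ?_).trans (Finset.sum_le_sum fun t _ ↦
    one_period_bound y (hd t) (hu t) ((le_max_left _ _).trans (hmax t).le)
      ((le_max_right _ _).trans (hmax t).le) hε hyε hcε)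
  · intro t _
    have h1 := hd t
    have h2 := hu t
    refine (norm_add_le _ _).trans ?_
    have hone (x : ℝ) : ‖cexp (y * I * x)‖ = 1 := by
      rw [mul_right_comm, ← ofReal_mul, norm_exp_ofReal_mul_I]
    rw [norm_mul, norm_mul, hone, hone, norm_real, norm_real, Real.norm_of_nonneg (by positivity),
      Real.norm_of_nonneg (by positivity)]
    apply le_of_eq
    field_simp
  · intro t _
    have h1 := hd t
    have h2 := hu t
    rw [norm_exp, re_mul_ofReal, charCoeff_re, Real.exp_le_one_iff]
    have := mul_nonneg (sq_nonneg y) (mul_pos h1 h2).le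
    linarith

/-! ### Weak convergence and uniform integrability -/

lemma tendsto_charFun_logReturnLaw {ζd ζu : (τ : ℕ) → Fin τ → ℝ} {ν : ℝ}
    (hζd0 : ∀ τ t, 0 < ζd τ t) (hζu0 : ∀ τ t, 0 < ζu τ t)
    (hsum : Tendsto (fun τ : ℕ => ∑ t : Fin τ, ζd τ t * ζu τ t) atTop (nhds ν))
    (hsmall : ∀ ε > (0 : ℝ), ∀ᶠ τ : ℕ in atTop, ∀ t : Fin τ, max (ζd τ t) (ζu τ t) < ε) (y : ℝ) :
    Tendsto (fun τ ↦ charFun (logReturnLaw (ζd τ) (ζu τ)) y) atTop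
      (nhds (cexp (charCoeff y * ν))) := by
  have hexp : Tendsto (fun τ : ℕ ↦ cexp (charCoeff y * (∑ t, ζd τ t * ζu τ t : ℝ))) atTop
      (nhds (cexp (charCoeff y * ν))) :=
    ((Complex.continuous_exp.comp (continuous_const.mul continuous_ofReal)).tendsto ν).comp hsum
  suffices h : Tendsto (fun τ : ℕ ↦ charFun (logReturnLaw (ζd τ) (ζu τ)) y -
      cexp (charCoeff y * (∑ t, ζd τ t * ζu τ t : ℝ))) atTop (nhds 0) by
    simpa using h.add hexp
  rw [Metric.tendsto_nhds]
  intro δ hδ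
  set K := (8 * |y| ^ 3 + 2 * |y| + 3 * y ^ 2) + ‖charCoeff y‖ ^ 2 with hK
  have hK0 : 0 ≤ K := by positivity
  have hν0 : 0 ≤ ν := ge_of_tendsto' hsum fun τ ↦
    Finset.sum_nonneg fun t _ ↦ (mul_pos (hζd0 τ t) (hζu0 τ t)).le
  -- small enough for the one-period bound to apply and for the accumulated error to be `< δ`
  obtain ⟨ε, hε0, h1, h2, h3, h4⟩ : ∃ ε : ℝ, 0 < ε ∧ ε ≤ 1 / 2 ∧ 2 * |y| * ε ≤ 1 ∧
      ‖charCoeff y‖ * ε ≤ 1 ∧ K * ε * (ν + 1) < δ := by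
    have ev (a b : ℝ) (hb : 0 < b) : ∀ᶠ ε : ℝ in nhdsWithin 0 (Set.Ioi 0), a * ε < b := by
      have : Tendsto (fun ε : ℝ ↦ a * ε) (nhdsWithin 0 (Set.Ioi 0)) (nhds (a * 0)) :=
        ((continuous_const.mul continuous_id).tendsto 0).mono_left nhdsWithin_le_nhds
      rw [mul_zero] at this
      exact this.eventually_lt_const hb
    have hall := (eventually_mem_nhdsWithin (a := (0 : ℝ)) (s := Set.Ioi 0)).and
      ((ev 1 (1 / 2) (by norm_num)).and ((ev (2 * |y|) 1 one_pos).and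
        ((ev ‖charCoeff y‖ 1 one_pos).and (ev (K * (ν + 1)) δ hδ))))
    obtain ⟨ε, a0, a1, a2, a3, a4⟩ := hall.exists
    exact ⟨ε, a0, by linarith, a2.le, a3.le, by linarith⟩
  filter_upwards [hsmall ε hε0, hsum.eventually_le_const (lt_add_one ν)] with τ hτ hs
  rw [dist_zero_right]
  refine (charFun_bound y (hζd0 τ) (hζu0 τ) hτ h1 h2 h3).trans_lt (lt_of_le_of_lt ?_ h4)
  rw [← hK]
  gcongr

lemma charFun_limit {ν : ℝ} (hν : 0 < ν) (y : ℝ) :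
    charFun (gaussianReal (-ν / 2) ν.toNNReal) y = cexp (charCoeff y * ν) := by
  rw [charFun_gaussianReal, Real.coe_toNNReal _ hν.le, charCoeff]
  congr 1
  push_cast
  ring

/-- The error of truncating `a` at level `M` is at most `a ^ 2 / M`. -/
lemma abs_sub_clamp_le (a : ℝ) {M : ℝ} (hM : 0 < M) :
    |a - max (-M) (min a M)| ≤ a ^ 2 / M := by
  rw [le_div_iff₀ hM]
  rcases le_total a M with h | h <;> rcases le_total (-M) a with h' | h'
  · rw [min_eq_left h, max_eq_right h']; simp; positivity
  · rw [min_eq_left h, max_eq_left h', abs_of_nonpos (by linarith)]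
    nlinarith
  · rw [min_eq_right h, max_eq_right (by linarith), abs_of_nonneg (by linarith)]
    nlinarith
  · rw [min_eq_right h, max_eq_right (by linarith), abs_of_nonneg (by linarith)]
    nlinarith

lemma abs_integral_sub_clamp_le {μ : Measure ℝ} [IsProbabilityMeasure μ] {h : ℝ → ℝ} {C M : ℝ}
    (hM : 0 < M) (hc : Continuous h) (hi : Integrable h μ) (hi2 : Integrable (fun x ↦ h x ^ 2) μ)
    (hC : ∫ x, h x ^ 2 ∂μ ≤ C) :
    |∫ x, h x ∂μ - ∫ x, max (-M) (min (h x) M) ∂μ| ≤ C / M := by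
  have hclamp : Integrable (fun x ↦ max (-M) (min (h x) M)) μ := by
    refine Integrable.of_bound (by fun_prop) M (.of_forall fun x ↦ ?_)
    rw [Real.norm_eq_abs, abs_le]
    exact ⟨le_max_left _ _, max_le (by linarith) (min_le_right _ _)⟩
  rw [← integral_sub hi hclamp]
  calc |∫ x, (h x - max (-M) (min (h x) M)) ∂μ|
      ≤ ∫ x, |h x - max (-M) (min (h x) M)| ∂μ := abs_integral_le_integral_abs
    _ ≤ ∫ x, h x ^ 2 / M ∂μ := integral_mono (hi.sub hclamp).abs (hi2.div_const M)
        fun x ↦ abs_sub_clamp_le _ hM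
    _ = (∫ x, h x ^ 2 ∂μ) / M := integral_div _ _
    _ ≤ C / M := by gcongr

/-- Weak convergence together with bounded second moments of `h` gives convergence of the
integrals of the possibly unbounded continuous function `h`. -/
lemma tendsto_integral_of_sq_bounded {μs : ℕ → ProbabilityMeasure ℝ} {μ : ProbabilityMeasure ℝ}
    (hμ : Tendsto μs atTop (nhds μ)) {h : ℝ → ℝ} {C : ℝ} (hc : Continuous h)
    (hi : ∀ n, Integrable h (μs n : Measure ℝ))
    (hi2 : ∀ n, Integrable (fun x ↦ h x ^ 2) (μs n : Measure ℝ))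
    (hC : ∀ᶠ n in atTop, ∫ x, h x ^ 2 ∂(μs n : Measure ℝ) ≤ C)
    (hi' : Integrable h (μ : Measure ℝ)) (hi2' : Integrable (fun x ↦ h x ^ 2) (μ : Measure ℝ))
    (hC' : ∫ x, h x ^ 2 ∂(μ : Measure ℝ) ≤ C) :
    Tendsto (fun n ↦ ∫ x, h x ∂(μs n : Measure ℝ)) atTop (nhds (∫ x, h x ∂(μ : Measure ℝ))) := by
  have hC0 : 0 ≤ C := (integral_nonneg fun x ↦ sq_nonneg (h x)).trans hC'
  rw [Metric.tendsto_nhds]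
  intro δ hδ
  -- this truncation level makes each of the two truncation errors less than `δ / 3`
  set M := 3 * (C + 1) / δ with hMdef
  have hM : 0 < M := by positivity
  have hCM : C / M < δ / 3 := by
    rw [hMdef, div_lt_iff₀ (by positivity)]
    field_simp
    linarith
  let f : BoundedContinuousFunction ℝ ℝ :=
    BoundedContinuousFunction.ofNormedAddCommGroup (fun x ↦ max (-M) (min (h x) M)) (by fun_prop) M
      fun x ↦ by
        rw [Real.norm_eq_abs, abs_le]
        exact ⟨le_max_left _ _, max_le (by linarith) (min_le_right _ _)⟩
  have hf := ProbabilityMeasure.tendsto_iff_forall_integral_tendsto.1 hμ f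
  rw [Metric.tendsto_nhds] at hf
  filter_upwards [hf (δ / 3) (by positivity), hC] with n hn hCn
  have b1 := abs_integral_sub_clamp_le hM hc (hi n) (hi2 n) hCn
  have b2 := abs_integral_sub_clamp_le hM hc hi' hi2' hC'
  change |∫ x, max (-M) (min (h x) M) ∂(μs n : Measure ℝ) -
    ∫ x, max (-M) (min (h x) M) ∂(μ : Measure ℝ)| < δ / 3 at hn
  rw [Real.dist_eq]
  rw [abs_le] at b1 b2
  rw [abs_lt] at hn ⊢
  constructor <;> linarith

end CRR

theorem stmt_6 (g : ℝ → ℝ) (L : NNReal) (hLip : LipschitzWith L g)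
    (hconv : ConvexOn ℝ Set.univ g) (S₀ ν : ℝ) (hS₀ : 0 < S₀) (hν : 0 < ν)
    (ζd ζu : (τ : ℕ) → Fin τ → ℝ)
    (hζd0 : ∀ τ t, 0 < ζd τ t) (hζd1 : ∀ τ t, ζd τ t < 1) (hζu0 : ∀ τ t, 0 < ζu τ t)
    (hsum : Tendsto (fun τ : ℕ => ∑ t : Fin τ, ζd τ t * ζu τ t) atTop (nhds ν))
    (hsmall : ∀ ε > (0 : ℝ), ∀ᶠ τ : ℕ in atTop, ∀ t : Fin τ, max (ζd τ t) (ζu τ t) < ε) :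
    Tendsto
      (fun τ : ℕ => ∑ s : Fin τ → Bool,
        (∏ t : Fin τ,
          if s t then ζd τ t / (ζd τ t + ζu τ t) else ζu τ t / (ζd τ t + ζu τ t)) *
          g (S₀ * ∏ t : Fin τ, if s t then 1 + ζu τ t else 1 - ζd τ t))
      atTop
      (nhds (∫ z, g (S₀ * Real.exp (Real.sqrt ν * z - ν / 2))
        ∂(ProbabilityTheory.gaussianReal 0 1))) := by
  set h : ℝ → ℝ := fun x ↦ g (S₀ * Real.exp x) with hh
  have hhc : Continuous h := hLip.continuous.comp (by fun_prop)
  have hleft (τ : ℕ) : ∑ s : Fin τ → Bool,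
        (∏ t : Fin τ,
          if s t then ζd τ t / (ζd τ t + ζu τ t) else ζu τ t / (ζd τ t + ζu τ t)) *
          g (S₀ * ∏ t : Fin τ, if s t then 1 + ζu τ t else 1 - ζd τ t) =
      ∫ x, h x ∂(CRR.logReturnLaw (ζd τ) (ζu τ)) := by
    rw [CRR.integral_logReturnLaw (hζd0 τ) (hζu0 τ)]
    refine Finset.sum_congr rfl fun s _ ↦ ?_
    rw [smul_eq_mul, hh]
    beta_reduce
    rw [Real.exp_sum]
    congr 3
    refine Finset.prod_congr rfl fun t _ ↦ ?_
    have := hζu0 τ t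
    have := hζd1 τ t
    split_ifs
    · rw [Real.exp_log (by linarith)]
    · rw [Real.exp_log (by linarith)]
  have hmap : (gaussianReal 0 1).map (fun z ↦ Real.sqrt ν * z - ν / 2) =
      gaussianReal (-ν / 2) ν.toNNReal := by
    have e : (fun z : ℝ ↦ Real.sqrt ν * z - ν / 2) = (· - ν / 2) ∘ (Real.sqrt ν * ·) := rfl
    rw [e, ← Measure.map_map (by fun_prop) (by fun_prop), gaussianReal_map_const_mul,
      gaussianReal_map_sub_const]
    congr 1
    · ring
    · ext
      simp [Real.sq_sqrt hν.le, hν.le]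
  have hright : ∫ z, g (S₀ * Real.exp (Real.sqrt ν * z - ν / 2)) ∂(gaussianReal 0 1) =
      ∫ x, h x ∂(gaussianReal (-ν / 2) ν.toNNReal) := by
    rw [← hmap, integral_map (by fun_prop) (hhc.aestronglyMeasurable)]
  simp_rw [hleft]
  rw [hright]
  have hprob (τ : ℕ) := CRR.isProbabilityMeasure_logReturnLaw (hζd0 τ) (hζu0 τ)
  let μs : ℕ → ProbabilityMeasure ℝ := fun τ ↦ ⟨CRR.logReturnLaw (ζd τ) (ζu τ), hprob τ⟩
  let μ : ProbabilityMeasure ℝ := ⟨gaussianReal (-ν / 2) ν.toNNReal, inferInstance⟩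
  have hweak : Tendsto μs atTop (nhds μ) := by
    refine ProbabilityMeasure.tendsto_of_tendsto_charFun fun y ↦ ?_
    change Tendsto (fun τ ↦ charFun (CRR.logReturnLaw (ζd τ) (ζu τ)) y) atTop
      (nhds (charFun (gaussianReal (-ν / 2) ν.toNNReal) y))
    rw [CRR.charFun_limit hν]
    exact CRR.tendsto_charFun_logReturnLaw hζd0 hζu0 hsum hsmall y
  -- Linear growth of `g` bounds `h ^ 2` by a multiple of the squared gross return.
  set A := 2 * g 0 ^ 2 with hA
  set B := 2 * (L * S₀) ^ 2 with hB
  have hB0 : 0 ≤ B := by positivity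
  have hbound (x : ℝ) : h x ^ 2 ≤ A + B * Real.exp (2 * x) := by
    have h1 := hLip.dist_le_mul (S₀ * Real.exp x) 0
    rw [Real.dist_eq, Real.dist_eq, sub_zero,
      abs_of_pos (mul_pos hS₀ (Real.exp_pos x))] at h1
    have h2 : (g (S₀ * Real.exp x) - g 0) ^ 2 ≤ (L * (S₀ * Real.exp x)) ^ 2 := by
      rw [← sq_abs]
      gcongr
    have h3 : h x ^ 2 ≤ 2 * g 0 ^ 2 + 2 * (g (S₀ * Real.exp x) - g 0) ^ 2 := by
      simp only [hh]
      nlinarith [sq_nonneg (g 0 - (g (S₀ * Real.exp x) - g 0))]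
    have h4 : Real.exp (2 * x) = Real.exp x ^ 2 := by rw [two_mul, Real.exp_add, sq]
    rw [h4]
    calc h x ^ 2 ≤ 2 * g 0 ^ 2 + 2 * (L * (S₀ * Real.exp x)) ^ 2 := by linarith
      _ = _ := by rw [hA, hB]; ring
  have hqint : Integrable (fun x ↦ A + B * Real.exp (2 * x)) (μ : Measure ℝ) :=
    (integrable_const A).add ((integrable_exp_mul_gaussianReal 2).const_mul B)
  have hsq : Integrable (fun x ↦ h x ^ 2) (μ : Measure ℝ) :=
    hqint.mono' (by fun_prop) (.of_forall fun x ↦ by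
      rw [Real.norm_of_nonneg (sq_nonneg _)]; exact hbound x)
  have hh1 : Integrable h (μ : Measure ℝ) :=
    ((memLp_two_iff_integrable_sq hhc.aestronglyMeasurable).2 hsq).integrable (by norm_num)
  refine CRR.tendsto_integral_of_sq_bounded hweak
    (C := max (A + B * Real.exp (ν + 1)) (∫ x, h x ^ 2 ∂(μ : Measure ℝ))) hhc
    (fun τ ↦ CRR.integrable_logReturnLaw _ _ _) (fun τ ↦ CRR.integrable_logReturnLaw _ _ _)
    ?_ hh1 hsq (le_max_right _ _)
  filter_upwards [hsum.eventually_le_const (lt_add_one ν)] with τ hτ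
  refine le_trans ?_ (le_max_left _ _)
  change ∫ x, h x ^ 2 ∂(CRR.logReturnLaw (ζd τ) (ζu τ)) ≤ _
  calc ∫ x, h x ^ 2 ∂(CRR.logReturnLaw (ζd τ) (ζu τ))
      ≤ ∫ x, (A + B * Real.exp (2 * x)) ∂(CRR.logReturnLaw (ζd τ) (ζu τ)) :=
        integral_mono (CRR.integrable_logReturnLaw _ _ _) (CRR.integrable_logReturnLaw _ _ _)
          hbound
    _ = A + B * ∏ t, (1 + ζd τ t * ζu τ t) := by
        rw [integral_add (CRR.integrable_logReturnLaw _ _ _) (CRR.integrable_logReturnLaw _ _ _),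
          integral_const_mul B, CRR.integral_exp_two_mul_logReturnLaw (hζd0 τ) (hζd1 τ) (hζu0 τ)]
        simp
    _ ≤ A + B * Real.exp (∑ t, ζd τ t * ζu τ t) := by
        rw [Real.exp_sum]
        gcongr with t
        · intro t _
          have := mul_pos (hζd0 τ t) (hζu0 τ t)
          linarith
        · linarith [Real.add_one_le_exp (ζd τ t * ζu τ t)]
    _ ≤ A + B * Real.exp (ν + 1) := by gcongr
end

section
/- Let g : ℝ → ℝ be concave and continuous, let S₀ > 0 and τ ≥ 1, and for t = 1, …, τ let U_t ⊆ ℝ be a nonempty bounded set with 0 ∈ U_t. Define g_τ(x) = g(x) and, for t = τ, …, 1, g_{t−1}(x) = ⨅_{Δ ∈ ℝ} ⨆_{r ∈ U_t} (g_t(x·(1+r)) − r·Δ). Then g₀(S₀) = g(S₀); that is, the τ-round upper hedging value of a concave payoff equals the payoff at the initial price. -/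
/-!
The recursion fixes every concave payoff `g`: each `G t` with `t ≤ τ` equals `g`. For fixed `x`,
choosing `r = 0` shows that every hedge costs at least `g x`. Conversely a supergradient `s` of `g`
at `x` gives `g (x * (1 + r)) ≤ g x + s * x * r` for all `r`, so the hedge `Δ = s * x` costs at most
`g x`. Since the uncertainty sets are bounded, the same inequality bounds the inner suprema, so
that they are genuine suprema in `ℝ`.
-/

/-- A concave function on `ℝ` has a supergradient at every point; a right derivative is one. -/
lemma exists_supergradient {g : ℝ → ℝ} (hg : ConcaveOn ℝ Set.univ g) (x : ℝ) :
    ∃ s : ℝ, ∀ y, g y ≤ g x + s * (y - x) := by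
  have hf := hg.neg
  have hx : x ∈ interior (Set.univ : Set ℝ) := by simp
  refine ⟨-derivWithin (-g) (Set.Ioi x) x, fun y => ?_⟩
  rcases lt_trichotomy x y with h | rfl | h
  · have h1 := hf.rightDeriv_le_slope_of_mem_interior hx (Set.mem_univ y) h
    rw [slope_def_field, le_div_iff₀ (sub_pos.2 h)] at h1
    simp only [Pi.neg_apply] at h1
    linarith
  · simp
  · have h1 := (hf.slope_le_leftDeriv_of_mem_interior (Set.mem_univ y) hx h).trans
      (hf.leftDeriv_le_rightDeriv_of_mem_interior hx)
    rw [slope_def_field, div_le_iff₀ (sub_pos.2 h)] at h1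
    simp only [Pi.neg_apply] at h1
    linarith

/-- One round of upper hedging leaves a concave payoff unchanged. -/
lemma hedge_step_s7 {g : ℝ → ℝ} (hg : ConcaveOn ℝ Set.univ g) {V : Set ℝ}
    (hb : Bornology.IsBounded V) (h0 : (0 : ℝ) ∈ V) (x : ℝ) :
    ⨅ Δ : ℝ, ⨆ r : V, (g (x * (1 + (r : ℝ))) - (r : ℝ) * Δ) = g x := by
  obtain ⟨s, hs⟩ := exists_supergradient hg x
  have hs' (r : ℝ) : g (x * (1 + r)) ≤ g x + s * x * r := by
    have := hs (x * (1 + r))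
    linarith
  have hne : Nonempty V := ⟨⟨0, h0⟩⟩
  obtain ⟨M, hM⟩ := hb.exists_norm_le
  have hbdd (Δ : ℝ) :
      BddAbove (Set.range fun r : V => g (x * (1 + (r : ℝ))) - (r : ℝ) * Δ) := by
    refine ⟨g x + |s * x - Δ| * M, ?_⟩
    rintro _ ⟨r, rfl⟩
    have h1 : (s * x - Δ) * r ≤ |s * x - Δ| * M := by
      refine (le_abs_self _).trans ?_
      rw [abs_mul]
      exact mul_le_mul_of_nonneg_left (hM r r.2) (abs_nonneg _)
    have h2 := hs' r
    dsimp only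
    linarith
  have hlow (Δ : ℝ) : g x ≤ ⨆ r : V, (g (x * (1 + (r : ℝ))) - (r : ℝ) * Δ) := by
    simpa using le_ciSup (hbdd Δ) ⟨0, h0⟩
  refine le_antisymm ?_ (le_ciInf hlow)
  refine (ciInf_le ⟨g x, Set.forall_mem_range.2 hlow⟩ (s * x)).trans (ciSup_le fun r => ?_)
  have := hs' r
  linarith

theorem stmt_7 (g : ℝ → ℝ) (hconc : ConcaveOn ℝ Set.univ g) (hcont : Continuous g)
    (S₀ : ℝ) (hS₀ : 0 < S₀) (τ : ℕ) (hτ : 1 ≤ τ)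
    (U : ℕ → Set ℝ) (hne : ∀ t, 1 ≤ t → t ≤ τ → (U t).Nonempty)
    (hbdd : ∀ t, 1 ≤ t → t ≤ τ → Bornology.IsBounded (U t))
    (h0 : ∀ t, 1 ≤ t → t ≤ τ → (0 : ℝ) ∈ U t)
    (G : ℕ → ℝ → ℝ) (hGτ : ∀ x, G τ x = g x)
    (hrec : ∀ t, 1 ≤ t → t ≤ τ → ∀ x, G (t - 1) x =
      ⨅ Δ : ℝ, ⨆ r : U t, (G t (x * (1 + (r : ℝ))) - (r : ℝ) * Δ)) :
    G 0 S₀ = g S₀ := by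
  have key : ∀ x, G 0 x = g x := by
    refine Nat.decreasingInduction (motive := fun t _ => ∀ x, G t x = g x)
      (fun t ht ih x => ?_) hGτ (Nat.zero_le τ)
    have h := hrec (t + 1) (by omega) ht x
    rw [Nat.add_sub_cancel] at h
    simp only [ih] at h
    rw [h]
    exact hedge_step_s7 hconc (hbdd _ (by omega) ht) (h0 _ (by omega) ht) x
  exact key S₀
end

section
/- Let g : ℝ → ℝ be concave and continuous, let S₀ > 0 and τ ≥ 1, and for t = 1, …, τ let 0 < ζ̲_t < 1 and ζ̄_t > 0. Define g_τ(x) = g(x) and, for t = τ, …, 1, g_{t−1}(x) = ⨆_{Δ ∈ ℝ} ⨅_{r ∈ [−ζ̲_t, ζ̄_t]} (g_t(x·(1+r)) − r·Δ). Then g₀(S₀) = Σ_{s ∈ {0,1}^τ} (∏_{t=1}^{τ} w_t(s_t)) · g(S₀·∏_{t=1}^{τ} ρ_t(s_t)), where ρ_t(0) = 1−ζ̲_t, ρ_t(1) = 1+ζ̄_t, w_t(0) = ζ̄_t/(ζ̲_t+ζ̄_t) and w_t(1) = ζ̲_t/(ζ̲_t+ζ̄_t); that is, the τ-round lower hedging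 value of a concave payoff equals the expectation of the payoff under the product of the per-round two-point risk-neutral measures supported on {−ζ̲_t, ζ̄_t}. -/
/-!
One round. If `f` is concave, then `r ↦ f (x * (1 + r)) - r * Δ` is concave on `[-a, b]`, so its
infimum is attained at an endpoint and equals `min (f (x * (1 - a)) + a * Δ) (f (x * (1 + b)) - b * Δ)`.
The mean of the two entries under the weights `b / (a + b)`, `a / (a + b)` does not depend on `Δ`, so
it bounds the minimum from above, and the hedge `Δ = (f (x * (1 + b)) - f (x * (1 - a))) / (a + b)`
equalizes the two entries. Hence the one-round value is that mean (`one_round`). As a function of `x`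
it is a nonnegative combination of concave functions, hence again concave, and the recursion can be
unrolled by induction on the number of rounds (`multi_round`).
-/

lemma concaveOn_comp_mul {f : ℝ → ℝ} (hf : ConcaveOn ℝ Set.univ f) (c : ℝ) :
    ConcaveOn ℝ Set.univ (fun x => f (x * c)) := by
  refine ⟨convex_univ, fun x _ y _ p q hp hq hpq => ?_⟩
  have h := hf.2 (Set.mem_univ (x * c)) (Set.mem_univ (y * c)) hp hq hpq
  simp only [smul_eq_mul] at h ⊢
  rwa [show (p * x + q * y) * c = p * (x * c) + q * (y * c) by ring]

lemma inf_eq_min {f : ℝ → ℝ} (hf : ConcaveOn ℝ Set.univ f) {a b : ℝ} (ha : 0 < a) (hb : 0 < b)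
    (x Δ : ℝ) :
    (⨅ r : Set.Icc (-a) b, (f (x * (1 + (r : ℝ))) - (r : ℝ) * Δ)) =
      min (f (x * (1 - a)) + a * Δ) (f (x * (1 + b)) - b * Δ) := by
  have hab : -a ≤ b := by linarith
  have hconc : ConcaveOn ℝ Set.univ (fun r : ℝ => f (x * (1 + r)) - r * Δ) := by
    refine ⟨convex_univ, fun r _ s _ p q hp hq hpq => ?_⟩
    have h := hf.2 (Set.mem_univ (x * (1 + r))) (Set.mem_univ (x * (1 + s))) hp hq hpq
    simp only [smul_eq_mul] at h ⊢
    have e : x * (1 + (p * r + q * s)) = p * (x * (1 + r)) + q * (x * (1 + s)) := by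
      linear_combination (-x) * hpq
    rw [e]
    linarith
  have hmin : ∀ r : Set.Icc (-a) b, min (f (x * (1 - a)) + a * Δ) (f (x * (1 + b)) - b * Δ) ≤
      f (x * (1 + (r : ℝ))) - (r : ℝ) * Δ := fun r => by
    have h := hconc.min_le_of_mem_Icc (Set.mem_univ (-a)) (Set.mem_univ b) r.2
    simpa [sub_eq_add_neg] using h
  have hbdd : BddBelow (Set.range fun r : Set.Icc (-a) b =>
      f (x * (1 + (r : ℝ))) - (r : ℝ) * Δ) := ⟨_, by rintro _ ⟨r, rfl⟩; exact hmin r⟩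
  haveI : Nonempty (Set.Icc (-a) b) := ⟨⟨b, hab, le_rfl⟩⟩
  refine le_antisymm (le_min ?_ (ciInf_le hbdd ⟨b, hab, le_rfl⟩)) (le_ciInf hmin)
  refine (ciInf_le hbdd ⟨-a, le_rfl, hab⟩).trans_eq ?_
  simp only [← sub_eq_add_neg]
  ring

lemma one_round {f : ℝ → ℝ} (hf : ConcaveOn ℝ Set.univ f) {a b : ℝ} (ha : 0 < a) (hb : 0 < b)
    (x : ℝ) :
    (⨆ Δ : ℝ, ⨅ r : Set.Icc (-a) b, (f (x * (1 + (r : ℝ))) - (r : ℝ) * Δ)) =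
      b / (a + b) * f (x * (1 - a)) + a / (a + b) * f (x * (1 + b)) := by
  simp only [inf_eq_min hf ha hb]
  have hab : 0 < a + b := by linarith
  generalize f (x * (1 - a)) = A
  generalize f (x * (1 + b)) = B
  have hle : ∀ Δ : ℝ, min (A + a * Δ) (B - b * Δ) ≤ b / (a + b) * A + a / (a + b) * B := by
    intro Δ
    have e : b / (a + b) * A + a / (a + b) * B =
        b / (a + b) * (A + a * Δ) + a / (a + b) * (B - b * Δ) := by ring
    have e1 : b / (a + b) + a / (a + b) = 1 := by field_simp; ring
    have h1 := mul_le_mul_of_nonneg_left (min_le_left (A + a * Δ) (B - b * Δ))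
      (div_pos hb hab).le
    have h2 := mul_le_mul_of_nonneg_left (min_le_right (A + a * Δ) (B - b * Δ))
      (div_pos ha hab).le
    calc min (A + a * Δ) (B - b * Δ)
        = (b / (a + b) + a / (a + b)) * min (A + a * Δ) (B - b * Δ) := by rw [e1, one_mul]
      _ ≤ _ := by rw [e, add_mul]; exact add_le_add h1 h2
  refine le_antisymm (ciSup_le hle) ?_
  refine le_trans (le_of_eq ?_)
    (le_ciSup (f := fun Δ : ℝ => min (A + a * Δ) (B - b * Δ))
      ⟨_, by rintro _ ⟨Δ, rfl⟩; exact hle Δ⟩ ((B - A) / (a + b)))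
  have e1 : A + a * ((B - A) / (a + b)) = b / (a + b) * A + a / (a + b) * B := by
    field_simp; ring
  have e2 : B - b * ((B - A) / (a + b)) = b / (a + b) * A + a / (a + b) * B := by
    field_simp; ring
  simp only [e1, e2, min_self]

/-- The induction removes the first round: the shifted sequence `t ↦ G (t + 1)` satisfies the
recursion with the remaining `n` uncertainty sets. Concavity of `G 0` is carried along because the
one-round formula needs it at every step. -/
lemma multi_round {g : ℝ → ℝ} (hconc : ConcaveOn ℝ Set.univ g) (n : ℕ) :
    ∀ (ζd ζu : Fin n → ℝ), (∀ t, 0 < ζd t) → (∀ t, 0 < ζu t) →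
    ∀ G : ℕ → ℝ → ℝ, (∀ x, G n x = g x) →
    (∀ t : Fin n, ∀ x, G t x =
      ⨆ Δ : ℝ, ⨅ r : Set.Icc (-(ζd t)) (ζu t),
        (G (t + 1) (x * (1 + (r : ℝ))) - (r : ℝ) * Δ)) →
    ConcaveOn ℝ Set.univ (G 0) ∧
    ∀ x, G 0 x = ∑ s : Fin n → Bool,
      (∏ t, if s t then ζd t / (ζd t + ζu t) else ζu t / (ζd t + ζu t)) *
        g (x * ∏ t, if s t then 1 + ζu t else 1 - ζd t) := by
  induction n with
  | zero =>
    intro ζd ζu _ _ G hG _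
    refine ⟨by rwa [show G 0 = g from funext hG], fun x => ?_⟩
    simp [hG]
  | succ n ih =>
    intro ζd ζu hd hu G hG hrec
    obtain ⟨hc, hs⟩ := ih (fun t => ζd t.succ) (fun t => ζu t.succ) (fun t => hd _)
      (fun t => hu _) (fun t => G (t + 1)) hG (fun t x => by simpa using hrec t.succ x)
    simp only [zero_add] at hc hs
    have h0 : ∀ x, G 0 x = ζu 0 / (ζd 0 + ζu 0) * G 1 (x * (1 - ζd 0)) +
        ζd 0 / (ζd 0 + ζu 0) * G 1 (x * (1 + ζu 0)) := fun x => by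
      rw [← one_round hc (hd 0) (hu 0) x]
      simpa using hrec 0 x
    have hpos : 0 < ζd 0 + ζu 0 := add_pos (hd 0) (hu 0)
    refine ⟨?_, fun x => ?_⟩
    · rw [show G 0 = _ from funext h0]
      exact ((concaveOn_comp_mul hc (1 - ζd 0)).smul (div_pos (hu 0) hpos).le).add
        ((concaveOn_comp_mul hc (1 + ζu 0)).smul (div_pos (hd 0) hpos).le)
    · rw [h0, hs, hs, ← (Fin.consEquiv (fun _ : Fin (n + 1) => Bool)).sum_comp,
        Fintype.sum_prod_type, Fintype.sum_bool, add_comm]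
      simp [Fin.consEquiv, Fin.prod_univ_succ, Finset.mul_sum, mul_assoc]

theorem stmt_9 (g : ℝ → ℝ) (hconc : ConcaveOn ℝ Set.univ g) (hcont : Continuous g)
    (S₀ : ℝ) (hS₀ : 0 < S₀) (τ : ℕ) (hτ : 1 ≤ τ)
    (ζd ζu : Fin τ → ℝ)
    (hζd0 : ∀ t, 0 < ζd t) (hζd1 : ∀ t, ζd t < 1) (hζu0 : ∀ t, 0 < ζu t)
    (G : ℕ → ℝ → ℝ) (hGτ : ∀ x, G τ x = g x)
    (hrec : ∀ t : Fin τ, ∀ x, G t x =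
      ⨆ Δ : ℝ, ⨅ r : Set.Icc (-(ζd t)) (ζu t), (G (t + 1) (x * (1 + (r : ℝ))) - (r : ℝ) * Δ)) :
    G 0 S₀ = ∑ s : Fin τ → Bool,
      (∏ t, if s t then ζd t / (ζd t + ζu t) else ζu t / (ζd t + ζu t)) *
        g (S₀ * ∏ t, if s t then 1 + ζu t else 1 - ζd t) :=
  (multi_round hconc τ ζd ζu hζd0 hζu0 G hGτ hrec).2 S₀
end

section
/- Let 0 < ζ̲ < 1 and ζ̄ > 0, let L > 0, and let g : ℝ → ℝ be nondecreasing and L-Lipschitz. Define h_τ(x) = g(x) and, for t = τ, …, 1, h_{t−1}(x) = sup { ∫ h_t(x·(1+r)) dP(r) : P a risk-neutral probability measure on [−ζ̲, ζ̄] }. Then for every t ∈ {0, …, τ}, the function h_t restricted to [0, ∞) is nondecreasing and L-Lipschitz, i.e., 0 ≤ h_t(x) − h_t(y) ≤ L·(x − y) for all x ≥ y ≥ 0. -/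
/-!
The property "nondecreasing and `L`-Lipschitz on `[0, ∞)`" is preserved by one step of the
recursion, so the theorem follows by downward induction on `t`. For a fixed risk-neutral `P`, the
inclusion `[-ζd, ζu] ⊆ [-1, ∞)` keeps `x * (1 + r)` nonnegative, hence for `y ≤ x` the difference
`h (x * (1 + r)) - h (y * (1 + r))` lies between `0` and `L * (x - y) * (1 + r)`. As `P` has mean
zero, integration gives bounds `0` and `L * (x - y)` that do not depend on `P`
(`integral_payoff_diff`), and these pass to suprema. The suprema are genuine because the payoffs at
a given price are bounded above and the Dirac mass at `0` is risk-neutral.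
-/

/-- The single-step value of the hedging recursion at price `x`: the supremum of the
expected payoff `∫ h (x * (1 + r)) dP(r)` over risk-neutral probability measures `P`
on the set `A` (i.e. probability measures with `P A = 1` and mean zero). -/
noncomputable def stepValue (A : Set ℝ) (h : ℝ → ℝ) (x : ℝ) : ℝ :=
  sSup {v : ℝ | ∃ P : MeasureTheory.Measure ℝ, MeasureTheory.IsProbabilityMeasure P ∧
    P A = 1 ∧ (∫ r, r ∂P) = 0 ∧ v = ∫ r, h (x * (1 + r)) ∂P}

/-- `h` is nondecreasing and `L`-Lipschitz on `[0, ∞)`. -/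
def MonoLipNonneg (L : ℝ) (h : ℝ → ℝ) : Prop :=
  ∀ x y : ℝ, 0 ≤ y → y ≤ x → 0 ≤ h x - h y ∧ h x - h y ≤ L * (x - y)

open MeasureTheory

lemma ae_mem_of_measure_Icc {a b : ℝ} {P : Measure ℝ} [IsProbabilityMeasure P]
    (hP : P (Set.Icc a b) = 1) : ∀ᵐ r ∂P, r ∈ Set.Icc a b := by
  rw [← prob_compl_eq_zero_iff measurableSet_Icc] at hP
  exact hP

lemma integrable_payoff {ζd ζu L : ℝ} (hζd1 : ζd < 1) {h : ℝ → ℝ} (hh : MonoLipNonneg L h)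
    {P : Measure ℝ} [IsProbabilityMeasure P] (hP : P (Set.Icc (-ζd) ζu) = 1)
    {x : ℝ} (hx : 0 ≤ x) : Integrable (fun r => h (x * (1 + r))) P := by
  -- Nothing is known about `h` on negative reals, so measurability comes from the monotone
  -- function `z ↦ h (max z 0)`, which agrees with `h` on `[0, ∞)`.
  have hk : Monotone fun z => h (max z 0) := fun a b hab => by
    have := (hh (max b 0) (max a 0) (le_max_right _ _) (max_le_max_right 0 hab)).1
    simpa using this
  have hI : Integrable (fun r => h (max (x * (1 + r)) 0)) P := by
    refine Integrable.of_mem_Icc (h (max (x * (1 + -ζd)) 0)) (h (max (x * (1 + ζu)) 0))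
      (hk.measurable.comp (by fun_prop)).aemeasurable ?_
    filter_upwards [ae_mem_of_measure_Icc hP] with r hr
    exact ⟨hk (mul_le_mul_of_nonneg_left (by linarith [hr.1]) hx),
      hk (mul_le_mul_of_nonneg_left (by linarith [hr.2]) hx)⟩
  refine hI.congr ?_
  filter_upwards [ae_mem_of_measure_Icc hP] with r hr
  rw [max_eq_left (mul_nonneg hx (by linarith [hr.1]))]

lemma integral_payoff_diff {ζd ζu L : ℝ} (hζd1 : ζd < 1) {h : ℝ → ℝ} (hh : MonoLipNonneg L h)
    {P : Measure ℝ} [IsProbabilityMeasure P] (hP : P (Set.Icc (-ζd) ζu) = 1)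
    (hmean : (∫ r, r ∂P) = 0) {x y : ℝ} (hy : 0 ≤ y) (hyx : y ≤ x) :
    0 ≤ (∫ r, h (x * (1 + r)) ∂P) - ∫ r, h (y * (1 + r)) ∂P ∧
      (∫ r, h (x * (1 + r)) ∂P) - (∫ r, h (y * (1 + r)) ∂P) ≤ L * (x - y) := by
  have hae := ae_mem_of_measure_Icc hP
  have hIx := integrable_payoff hζd1 hh hP (hy.trans hyx)
  have hIy := integrable_payoff hζd1 hh hP hy
  have hId : Integrable (fun r : ℝ => r) P :=
    Integrable.of_mem_Icc (-ζd) ζu aemeasurable_id hae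
  have hpt : ∀ r ∈ Set.Icc (-ζd) ζu, 0 ≤ h (x * (1 + r)) - h (y * (1 + r)) ∧
      h (x * (1 + r)) - h (y * (1 + r)) ≤ L * (x - y) * (1 + r) := fun r hr => by
    have h1 : 0 ≤ 1 + r := by linarith [hr.1]
    have := hh (x * (1 + r)) (y * (1 + r)) (mul_nonneg hy h1)
      (mul_le_mul_of_nonneg_right hyx h1)
    exact ⟨this.1, this.2.trans_eq (by ring)⟩
  rw [← integral_sub hIx hIy]
  refine ⟨integral_nonneg_of_ae (hae.mono fun r hr => (hpt r hr).1), ?_⟩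
  calc ∫ r, (h (x * (1 + r)) - h (y * (1 + r))) ∂P
      ≤ ∫ r, L * (x - y) * (1 + r) ∂P :=
        integral_mono_ae (hIx.sub hIy) (((integrable_const 1).add hId).const_mul _)
          (hae.mono fun r hr => (hpt r hr).2)
    _ = L * (x - y) := by
        rw [integral_const_mul, integral_add (integrable_const 1) hId, hmean]
        simp

lemma monoLipNonneg_stepValue {ζd ζu L : ℝ} (hζd0 : 0 < ζd) (hζd1 : ζd < 1) (hζu : 0 < ζu)
    {h : ℝ → ℝ} (hh : MonoLipNonneg L h) :
    MonoLipNonneg L (stepValue (Set.Icc (-ζd) ζu) h) := by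
  have hne : ∀ z : ℝ, {v : ℝ | ∃ P : Measure ℝ, IsProbabilityMeasure P ∧
      P (Set.Icc (-ζd) ζu) = 1 ∧ (∫ r, r ∂P) = 0 ∧
        v = ∫ r, h (z * (1 + r)) ∂P}.Nonempty := fun z =>
    ⟨_, Measure.dirac 0, inferInstance, by simp [hζd0.le, hζu.le], by simp, rfl⟩
  -- Comparison with the price `0`, where every payoff equals `h 0`, bounds the payoffs at `z`.
  have hbdd : ∀ z : ℝ, 0 ≤ z → BddAbove {v : ℝ | ∃ P : Measure ℝ, IsProbabilityMeasure P ∧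
      P (Set.Icc (-ζd) ζu) = 1 ∧ (∫ r, r ∂P) = 0 ∧
        v = ∫ r, h (z * (1 + r)) ∂P} := by
    rintro z hz
    refine ⟨h 0 + L * z, ?_⟩
    rintro v ⟨P, hPp, hP, hm, rfl⟩
    have := (integral_payoff_diff hζd1 hh hP hm le_rfl hz).2
    simp only [zero_mul, integral_const, probReal_univ, one_smul, sub_zero] at this
    linarith
  intro x y hy hyx
  constructor
  · rw [sub_nonneg]
    refine csSup_le (hne y) ?_
    rintro v ⟨P, hPp, hP, hm, rfl⟩
    exact (sub_nonneg.1 (integral_payoff_diff hζd1 hh hP hm hy hyx).1).trans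
      (le_csSup (hbdd x (hy.trans hyx)) ⟨P, hPp, hP, hm, rfl⟩)
  · rw [sub_le_iff_le_add]
    refine csSup_le (hne x) ?_
    rintro v ⟨P, hPp, hP, hm, rfl⟩
    exact (sub_le_iff_le_add.1 (integral_payoff_diff hζd1 hh hP hm hy hyx).2).trans
      (add_le_add_right (le_csSup (hbdd y hy) ⟨P, hPp, hP, hm, rfl⟩) _)

theorem stmt_10 (ζd ζu L : ℝ) (hζd0 : 0 < ζd) (hζd1 : ζd < 1) (hζu : 0 < ζu) (hL : 0 < L)
    (g : ℝ → ℝ) (hmono : Monotone g) (hLip : ∀ x y, |g x - g y| ≤ L * |x - y|)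
    (τ : ℕ) (H : ℕ → ℝ → ℝ) (hHτ : ∀ x, H τ x = g x)
    (hrec : ∀ t < τ, ∀ x, H t x = stepValue (Set.Icc (-ζd) ζu) (H (t + 1)) x) :
    ∀ t ≤ τ, ∀ x y : ℝ, 0 ≤ y → y ≤ x →
      0 ≤ H t x - H t y ∧ H t x - H t y ≤ L * (x - y) := by
  intro t ht
  change MonoLipNonneg L (H t)
  induction ht using Nat.decreasingInduction with
  | self =>
    intro x y _ hyx
    rw [hHτ, hHτ]
    have := hLip x y
    rw [abs_of_nonneg (sub_nonneg.2 hyx)] at this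
    exact ⟨sub_nonneg.2 (hmono hyx), (le_abs_self _).trans this⟩
  | of_succ t ht ih =>
    rw [funext (hrec t ht)]
    exact monoLipNonneg_stepValue hζd0 hζd1 hζu ih
end

section
/- Let 0 < ζ̲ < 1, ζ̄ > 0, L > 0, and let h : ℝ → ℝ be nondecreasing and L-Lipschitz with h(0) = 0. Let ε > 0 satisfy ε < min(ζ̲, ζ̄) and suppose (ζ̲+ζ̄)/ε is a positive integer; let Û = {−ζ̲ + k·ε : k = 0, 1, …, (ζ̲+ζ̄)/ε} be the ε-grid discretization of [−ζ̲, ζ̄]. For x ≥ 0 define v(x) = sup { ∫ h(x·(1+r)) dP(r) : P a risk-neutral probability measure on [−ζ̲, ζ̄] } and vᵐ(x) = sup { ∫ h(x·(1+r)) dP(r) : P a risk-neutral probability measure on Û }. Then for all x ≥ 0: 0 ≤ v(x) − vᵐ(x) ≤ √(2·L·v(x)·x·ε) + 2·L·x·ε. -/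
/-- The `ε`-grid discretization `{-ζd, -ζd + ε, -ζd + 2ε, …, -ζd + nε}` of the
interval `[-ζd, -ζd + nε]`. -/
def gridSet (ζd ε : ℝ) (n : ℕ) : Set ℝ := {r : ℝ | ∃ k : ℕ, k ≤ n ∧ r = -ζd + k * ε}

open MeasureTheory

/-- The piecewise linear hat function of height `1` supported on `[-1, 1]`. -/
noncomputable def hat (t : ℝ) : ℝ := max 0 (1 - |t|)

lemma hat_nonneg (t : ℝ) : 0 ≤ hat t := le_max_left _ _

lemma continuous_hat : Continuous hat := by
  unfold hat; fun_prop

/-- Hat-weighted sums are linear interpolation between the two neighbouring nodes. -/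
lemma sum_hat (f : ℕ → ℝ) {n j : ℕ} (hj : j + 1 ≤ n) {s : ℝ} (h1 : (j : ℝ) ≤ s)
    (h2 : s ≤ j + 1) :
    ∑ k ∈ Finset.range (n + 1), hat (s - k) * f k
      = (j + 1 - s) * f j + (s - j) * f (j + 1) := by
  have hsub : ({j, j + 1} : Finset ℕ) ⊆ Finset.range (n + 1) := by
    intro k hk
    simp only [Finset.mem_insert, Finset.mem_singleton] at hk
    simp only [Finset.mem_range]
    omega
  rw [← Finset.sum_subset hsub, Finset.sum_pair (by omega)]
  · have e1 : hat (s - j) = j + 1 - s := by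
      unfold hat
      rw [abs_of_nonneg (by linarith), max_eq_right (by linarith)]; ring
    have e2 : hat (s - (j + 1 : ℕ)) = s - j := by
      unfold hat
      push_cast
      rw [abs_of_nonpos (by linarith), max_eq_right (by linarith)]; ring
    rw [e1, e2]
  · intro k _ hk
    simp only [Finset.mem_insert, Finset.mem_singleton, not_or] at hk
    have : hat (s - k) = 0 := by
      unfold hat
      apply max_eq_left
      rcases lt_or_gt_of_ne hk.1 with hlt | hgt
      · have : (k : ℝ) + 1 ≤ j := by exact_mod_cast hlt
        have := le_abs_self (s - k)
        linarith
      · have : (j : ℝ) + 2 ≤ k := by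
          have : j + 2 ≤ k := by omega
          exact_mod_cast this
        have := neg_abs_le (s - k)
        linarith
    rw [this, zero_mul]

lemma exists_cell {n : ℕ} (hn : 0 < n) {s : ℝ} (h0 : 0 ≤ s) (h1 : s ≤ n) :
    ∃ j : ℕ, j + 1 ≤ n ∧ (j : ℝ) ≤ s ∧ s ≤ j + 1 := by
  rcases h1.eq_or_lt with rfl | hlt
  -- the right endpoint belongs to the last cell, not to the one its floor would give
  · refine ⟨n - 1, by omega, ?_, ?_⟩
    · exact_mod_cast Nat.sub_le n 1
    · exact_mod_cast (by omega : n ≤ n - 1 + 1)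
  · exact ⟨⌊s⌋₊, (Nat.floor_lt h0).2 hlt, Nat.floor_le h0, (Nat.lt_floor_add_one s).le⟩

lemma integrable_of_supp_Icc {P : Measure ℝ} [IsProbabilityMeasure P] {a b : ℝ}
    (hP : ∀ᵐ r ∂P, r ∈ Set.Icc a b) {F : ℝ → ℝ} (hF : Continuous F) : Integrable F P := by
  obtain ⟨C, hC⟩ := isCompact_Icc.exists_bound_of_continuousOn (s := Set.Icc a b) hF.continuousOn
  exact Integrable.of_bound hF.aestronglyMeasurable C (hP.mono fun r hr => hC r hr)

/-- Mean-preserving discretization of a risk-neutral measure: the expectation of a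
`K`-Lipschitz function decreases by at most `K * ε`. -/
lemma exists_grid_measure {ζd ζu ε : ℝ} (hε : 0 < ε) {n : ℕ} (hn : 0 < n)
    (hgrid : ζd + ζu = n * ε) {P : Measure ℝ} [IsProbabilityMeasure P]
    (hP : P (Set.Icc (-ζd) ζu) = 1) (hmean : ∫ r, r ∂P = 0)
    {g : ℝ → ℝ} {K : ℝ} (hg : Continuous g) (hgK : ∀ r r', |g r - g r'| ≤ K * |r - r'|) :
    ∃ Q : Measure ℝ, IsProbabilityMeasure Q ∧ Q (gridSet ζd ε n) = 1 ∧ (∫ r, r ∂Q) = 0 ∧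
      ∫ r, g r ∂P - K * ε ≤ ∫ r, g r ∂Q := by
  have hae : ∀ᵐ r ∂P, r ∈ Set.Icc (-ζd) ζu := (mem_ae_iff_prob_eq_one measurableSet_Icc).2 hP
  have hK : 0 ≤ K := by
    have := (abs_nonneg _).trans (hgK 1 0)
    simpa using this
  let s : ℝ → ℝ := fun r => (r + ζd) / ε
  let p : ℕ → ℝ := fun k => -ζd + k * ε
  let c : ℕ → ℝ := fun k => ∫ r, hat (s r - k) ∂P
  have hscont : Continuous s := by fun_prop
  have hhatc : ∀ k : ℕ, Continuous fun r => hat (s r - k) := fun k =>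
    continuous_hat.comp (hscont.sub continuous_const)
  have hc : ∀ k, 0 ≤ c k := fun k => integral_nonneg fun r => hat_nonneg _
  have hcell : ∀ r ∈ Set.Icc (-ζd) ζu, ∃ j : ℕ, j + 1 ≤ n ∧ (j : ℝ) ≤ s r ∧ s r ≤ j + 1 := by
    intro r hr
    refine exists_cell hn (div_nonneg (by linarith [hr.1]) hε.le) ?_
    rw [div_le_iff₀ hε]
    linarith [hr.2]
  have hsr : ∀ r, r = -ζd + s r * ε := by
    intro r
    simp only [s]
    field_simp
    ring
  -- summation against the weights `c` is integration of the interpolant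
  have hswap : ∀ f : ℕ → ℝ, ∑ k ∈ Finset.range (n + 1), c k * f k
      = ∫ r, ∑ k ∈ Finset.range (n + 1), hat (s r - k) * f k ∂P := by
    intro f
    rw [integral_finsetSum]
    · exact Finset.sum_congr rfl fun k _ => (integral_mul_const _ _).symm
    · exact fun k _ => integrable_of_supp_Icc hae ((hhatc k).mul continuous_const)
  have hsum : ∑ k ∈ Finset.range (n + 1), c k = 1 := by
    have h1 := hswap fun _ => 1
    simp only [mul_one] at h1
    rw [h1, integral_congr_ae (g := fun _ => (1 : ℝ))]
    · simp
    · filter_upwards [hae] with r hr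
      obtain ⟨j, hj, h1, h2⟩ := hcell r hr
      have := sum_hat (fun _ => 1) hj h1 h2
      simp only [mul_one] at this
      rw [this]; ring
  let Q : Measure ℝ := ∑ k ∈ Finset.range (n + 1), ENNReal.ofReal (c k) • Measure.dirac (p k)
  have hQapp : ∀ A : Set ℝ, (∀ k ≤ n, p k ∈ A) → Q A = 1 := by
    intro A hA
    simp only [Q, Measure.finsetSum_apply, Measure.smul_apply, smul_eq_mul]
    rw [Finset.sum_congr rfl (g := fun k => ENNReal.ofReal (c k)),
      ← ENNReal.ofReal_sum_of_nonneg fun k _ => hc k, hsum, ENNReal.ofReal_one]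
    intro k hk
    rw [Measure.dirac_apply_of_mem (hA k (by simpa [Nat.lt_succ_iff] using hk)), mul_one]
  have hQint : ∀ F : ℝ → ℝ, ∫ r, F r ∂Q = ∑ k ∈ Finset.range (n + 1), c k * F (p k) := by
    intro F
    simp only [Q]
    rw [integral_finsetSum_measure]
    · refine Finset.sum_congr rfl fun k _ => ?_
      rw [integral_smul_measure, integral_dirac, ENNReal.toReal_ofReal (hc k), smul_eq_mul]
    · intro k _
      exact (integrable_dirac (by simp)).smul_measure ENNReal.ofReal_ne_top
  refine ⟨Q, ⟨hQapp _ fun k _ => Set.mem_univ _⟩, hQapp _ fun k hk => ⟨k, hk, rfl⟩, ?_, ?_⟩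
  · rw [hQint, hswap, ← hmean]
    refine integral_congr_ae ?_
    filter_upwards [hae] with r hr
    obtain ⟨j, hj, h1, h2⟩ := hcell r hr
    rw [sum_hat p hj h1 h2]
    conv_rhs => rw [hsr r]
    simp only [p]
    push_cast
    ring
  · rw [hQint, hswap fun k => g (p k)]
    have hconst : ∫ r, g r ∂P - K * ε = ∫ r, (g r - K * ε) ∂P := by
      rw [integral_sub (integrable_of_supp_Icc hae hg) (integrable_const _)]
      simp
    rw [hconst]
    refine integral_mono_ae ?_ ?_ ?_
    · exact integrable_of_supp_Icc hae (hg.sub continuous_const)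
    · exact integrable_of_supp_Icc hae
        (continuous_finsetSum _ fun k _ => (hhatc k).mul continuous_const)
    · filter_upwards [hae] with r hr
      obtain ⟨j, hj, h1, h2⟩ := hcell r hr
      rw [sum_hat (fun k => g (p k)) hj h1 h2]
      have key : ∀ k : ℕ, |s r - k| ≤ 1 → g r - K * ε ≤ g (p k) := by
        intro k hk
        have e : r - p k = (s r - k) * ε := by
          conv_lhs => rw [hsr r]
          simp only [p]
          ring
        have hd : |r - p k| ≤ ε := by
          rw [e, abs_mul, abs_of_pos hε]
          exact mul_le_of_le_one_left hε.le hk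
        have := (le_abs_self _).trans ((hgK r (p k)).trans (mul_le_mul_of_nonneg_left hd hK))
        linarith
      have k1 := key j (abs_le.2 ⟨by linarith, by linarith⟩)
      have k2 := key (j + 1) (abs_le.2 ⟨by push_cast; linarith, by push_cast; linarith⟩)
      have m1 := mul_le_mul_of_nonneg_left k1 (by linarith : 0 ≤ (j : ℝ) + 1 - s r)
      have m2 := mul_le_mul_of_nonneg_left k2 (by linarith : 0 ≤ s r - j)
      linarith

theorem stmt_11 (ζd ζu L ε : ℝ) (hζd0 : 0 < ζd) (hζd1 : ζd < 1) (hζu : 0 < ζu)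
    (hL : 0 < L) (hε : 0 < ε) (hεsmall : ε < min ζd ζu)
    (n : ℕ) (hn : 0 < n) (hgrid : ζd + ζu = n * ε)
    (h : ℝ → ℝ) (hmono : Monotone h) (hLip : ∀ x y, |h x - h y| ≤ L * |x - y|)
    (hh0 : h 0 = 0) :
    ∀ x : ℝ, 0 ≤ x →
      0 ≤ stepValue (Set.Icc (-ζd) ζu) h x - stepValue (gridSet ζd ε n) h x ∧
      stepValue (Set.Icc (-ζd) ζu) h x - stepValue (gridSet ζd ε n) h x ≤
        Real.sqrt (2 * L * stepValue (Set.Icc (-ζd) ζu) h x * x * ε) + 2 * L * x * ε := by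
  intro x hx
  have hcont : Continuous h := by
    have : LipschitzWith L.toNNReal h := LipschitzWith.of_dist_le_mul fun a b => by
      rw [Real.dist_eq, Real.dist_eq, Real.coe_toNNReal _ hL.le]
      exact hLip a b
    exact this.continuous
  have hg : Continuous fun r => h (x * (1 + r)) := by fun_prop
  have hgK : ∀ r r', |h (x * (1 + r)) - h (x * (1 + r'))| ≤ (L * x) * |r - r'| := by
    intro r r'
    refine (hLip _ _).trans_eq ?_
    rw [show x * (1 + r) - x * (1 + r') = x * (r - r') by ring, abs_mul, abs_of_nonneg hx,
      mul_assoc]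
  have hsub : gridSet ζd ε n ⊆ Set.Icc (-ζd) ζu := by
    rintro r ⟨k, hk, rfl⟩
    have h1 : (k : ℝ) * ε ≤ n * ε := by gcongr
    have h2 : 0 ≤ (k : ℝ) * ε := by positivity
    exact ⟨by linarith, by linarith⟩
  have hIcc0 : (0 : ℝ) ∈ Set.Icc (-ζd) ζu := ⟨by linarith, hζu.le⟩
  unfold stepValue
  set S := {v : ℝ | ∃ P : Measure ℝ, IsProbabilityMeasure P ∧
    P (Set.Icc (-ζd) ζu) = 1 ∧ (∫ r, r ∂P) = 0 ∧ v = ∫ r, h (x * (1 + r)) ∂P} with hS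
  set T := {v : ℝ | ∃ P : Measure ℝ, IsProbabilityMeasure P ∧
    P (gridSet ζd ε n) = 1 ∧ (∫ r, r ∂P) = 0 ∧ v = ∫ r, h (x * (1 + r)) ∂P} with hT
  have hTS : T ⊆ S := by
    rintro v ⟨P, hPp, hP, hm, rfl⟩
    exact ⟨P, hPp, le_antisymm prob_le_one (hP ▸ measure_mono hsub), hm, rfl⟩
  have hSbdd : BddAbove S := by
    refine ⟨h (x * (1 + ζu)), ?_⟩
    rintro v ⟨P, hPp, hP, hm, rfl⟩
    have hae : ∀ᵐ r ∂P, r ∈ Set.Icc (-ζd) ζu := (mem_ae_iff_prob_eq_one measurableSet_Icc).2 hP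
    have := integral_mono_ae (integrable_of_supp_Icc hae hg)
      (integrable_const (h (x * (1 + ζu)))) (hae.mono fun r hr =>
        hmono (mul_le_mul_of_nonneg_left (by linarith [hr.2] : 1 + r ≤ 1 + ζu) hx))
    simpa using this
  have hSne : S.Nonempty :=
    ⟨_, Measure.dirac 0, inferInstance, Measure.dirac_apply_of_mem hIcc0, by simp, rfl⟩
  have hstep : ∀ v ∈ S, ∃ w ∈ T, v ≤ w + L * x * ε := by
    rintro v ⟨P, hPp, hP, hm, rfl⟩
    obtain ⟨Q, hQp, hQ, hQm, hle⟩ := exists_grid_measure hε hn hgrid hP hm hg hgK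
    exact ⟨_, ⟨Q, hQp, hQ, hQm, rfl⟩, by linarith⟩
  have hTne : T.Nonempty := by
    obtain ⟨v, hv⟩ := hSne
    obtain ⟨w, hw, _⟩ := hstep v hv
    exact ⟨w, hw⟩
  have hup : sSup S ≤ sSup T + L * x * ε := by
    refine csSup_le hSne fun v hv => ?_
    obtain ⟨w, hw, hvw⟩ := hstep v hv
    have := le_csSup (hSbdd.mono hTS) hw
    linarith
  refine ⟨sub_nonneg.2 (csSup_le_csSup hSbdd hTne hTS), ?_⟩
  have h1 := Real.sqrt_nonneg (2 * L * sSup S * x * ε)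
  have h2 : 0 ≤ L * x * ε := by positivity
  linarith
end

section
/- Let 0 < ζ̲ < 1 and ζ̄ > 0, let g : ℝ → ℝ be convex and continuous, and let τ ≥ 1. Define the American value functions by h_τ(x) = g(x) and, for t = τ, …, 1, h_{t−1}(x) = max( (ζ̄·h_t(x·(1−ζ̲)) + ζ̲·h_t(x·(1+ζ̄)))/(ζ̲+ζ̄), g(x) ), and the European value functions by e_τ(x) = g(x) and e_{t−1}(x) = (ζ̄·e_t(x·(1−ζ̲)) + ζ̲·e_t(x·(1+ζ̄)))/(ζ̲+ζ̄). Then for every t ∈ {0, …, τ} and every x ≥ 0, h_t(x) ≥ g(x) and h_t(x) = e_t(x); that is, for a convex payoff the American option's upper hedging bound equals the European one, and it is optimal to exercise only at maturity. -/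
/-!
The two return values `-ζd` and `ζu` have mean zero under the weights `ζu / (ζd + ζu)` and
`ζd / (ζd + ζu)`, so Jensen's inequality bounds the convex payoff `g x` by the expectation of `g`
at the next round (`le_two_point_mean`). Going backwards in time, `g ≤ H (t + 1)` then makes the
continuation value at `t` dominate `g x`, so the maximum in the American recursion is always the
continuation value and the recursion coincides with the European one. The argument only carries
`g ≤ H (t + 1)` along, not convexity of the value functions.
-/

/-- Jensen's inequality for the mean-zero two-point law on `{-a, b}`. -/
lemma le_two_point_mean {a b : ℝ} (ha : 0 < a) (hb : 0 < b) {g : ℝ → ℝ}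
    (hg : ConvexOn ℝ Set.univ g) (x : ℝ) :
    g x ≤ (b * g (x * (1 - a)) + a * g (x * (1 + b))) / (a + b) := by
  have hab : 0 < a + b := add_pos ha hb
  have hJ := hg.2 (Set.mem_univ (x * (1 - a))) (Set.mem_univ (x * (1 + b)))
    (div_pos hb hab).le (div_pos ha hab).le (by field_simp; ring)
  have hx : (b / (a + b)) • (x * (1 - a)) + (a / (a + b)) • (x * (1 + b)) = x := by
    simp only [smul_eq_mul]
    field_simp
    ring
  rw [hx] at hJ
  calc g x ≤ _ := hJ
    _ = _ := by simp only [smul_eq_mul]; ring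

theorem stmt_15 (ζd ζu : ℝ) (hζd0 : 0 < ζd) (hζd1 : ζd < 1) (hζu : 0 < ζu)
    (g : ℝ → ℝ) (hconv : ConvexOn ℝ Set.univ g) (hcont : Continuous g)
    (τ : ℕ) (hτ : 1 ≤ τ)
    (H E : ℕ → ℝ → ℝ) (hHτ : ∀ x, H τ x = g x) (hEτ : ∀ x, E τ x = g x)
    (hHrec : ∀ t < τ, ∀ x, H t x =
      max ((ζu * H (t + 1) (x * (1 - ζd)) + ζd * H (t + 1) (x * (1 + ζu))) / (ζd + ζu)) (g x))
    (hErec : ∀ t < τ, ∀ x, E t x =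
      (ζu * E (t + 1) (x * (1 - ζd)) + ζd * E (t + 1) (x * (1 + ζu))) / (ζd + ζu)) :
    ∀ t ≤ τ, ∀ x : ℝ, 0 ≤ x → g x ≤ H t x ∧ H t x = E t x := by
  have key : ∀ t ≤ τ, ∀ x : ℝ, g x ≤ H t x ∧ H t x = E t x := by
    intro t ht
    induction ht using Nat.decreasingInduction with
    | self => exact fun x => ⟨(hHτ x).ge, (hHτ x).trans (hEτ x).symm⟩
    | @of_succ t ht ih =>
      intro x
      have hcont_val : g x ≤
          (ζu * H (t + 1) (x * (1 - ζd)) + ζd * H (t + 1) (x * (1 + ζu))) / (ζd + ζu) := by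
        refine (le_two_point_mean hζd0 hζu hconv x).trans ?_
        gcongr
        · exact (ih _).1
        · exact (ih _).1
      rw [hHrec t ht x, max_eq_left hcont_val, hErec t ht x, (ih _).2, (ih _).2]
      refine ⟨?_, rfl⟩
      rwa [(ih _).2, (ih _).2] at hcont_val
  exact fun t ht x _ => key t ht x
end

section
/- Let g : ℝ → ℝ be convex and continuous, S₀ > 0, ζ̲ > 0, ζ̄ > 0, q ∈ (0, 1), and let ν be a Borel probability measure on ℝ with bounded support (the distribution of the jump return Y) with mean m = ∫ y dν(y). Suppose −ζ̄·(1−q) ≤ q·m ≤ ζ̲·(1−q). Then ⨅_{Δ ∈ ℝ} ⨆_{r ∈ [−ζ̲, ζ̄]} ( (1−q)·(g(S₀·(1+r)) − Δ·r) + q·∫ (g(S₀·(1+y)) − Δ·y) dν(y) ) = (1−q)·( w₁·g(S₀·(1−ζ̲)) + w₂·g(S₀·(1+ζ̄)) ) + q·∫ g(S₀·(1+y)) dν(y), where w₁ = (ζ̄ + q·m/(1−q))/(ζ̲+ζ̄) and w₂ = (ζ̲ − q·m/(1−q))/(ζ̲+ζ̄). -/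
open MeasureTheory

/-!
Write `φ r = g (S₀ (1 + r))`, `m = ∫ y ∂ν` and let `w₁, w₂` be the weights of the statement. They are
nonnegative because of the two bounds on `q m`, they sum to `1`, and the two-point law they put on
`-ζd, ζu` has mean `-q m / (1 - q)`: the overall expected return vanishes under it. Averaging the
hedged payoff at the two endpoints with these weights therefore removes `Δ`, and the average, which
is the right-hand side, bounds the supremum from below for every `Δ`. Conversely, if `Δ` is the slope
of the chord of `φ` over `[-ζd, ζu]`, convexity bounds `φ r - Δ r` by its common value at the
endpoints, so the supremum is at most the right-hand side (`le_chord` carries this step).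
Boundedness of the support makes the integrals finite (`integrable_of_bounded_support`), so that
`∫ (φ y - Δ y) ∂ν = ∫ φ ∂ν - Δ m`.
-/

/-- A continuous function is integrable against a probability measure carried by a bounded set,
which need not be measurable. -/
lemma integrable_of_bounded_support {ν : Measure ℝ} [IsProbabilityMeasure ν] {K : Set ℝ}
    (hK : Bornology.IsBounded K) (hνK : ν K = 1) {f : ℝ → ℝ} (hf : Continuous f) :
    Integrable f ν := by
  obtain ⟨R, hR⟩ := hK.subset_closedBall 0
  have h1 : ν (Metric.closedBall 0 R) = 1 :=
    le_antisymm prob_le_one (hνK ▸ measure_mono hR)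
  have hae : ∀ᵐ y ∂ν, y ∈ Metric.closedBall (0 : ℝ) R :=
    (mem_ae_iff_prob_eq_one Metric.isClosed_closedBall.measurableSet).2 h1
  obtain ⟨C, hC⟩ :=
    (isCompact_closedBall (0 : ℝ) R).exists_bound_of_continuousOn hf.continuousOn
  exact Integrable.of_bound hf.aestronglyMeasurable C (hae.mono fun y hy => hC y hy)

/-- A convex function lies below its chord over `[-a, b]`, with the slope term moved to the left. -/
lemma le_chord {φ : ℝ → ℝ} (hφ : ConvexOn ℝ Set.univ φ) {a b r : ℝ} (hab : 0 < a + b)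
    (har : -a ≤ r) (hrb : r ≤ b) :
    φ r - (φ b - φ (-a)) / (a + b) * r ≤ φ (-a) + (φ b - φ (-a)) / (a + b) * a := by
  have h := hφ.2 (Set.mem_univ (-a)) (Set.mem_univ b)
    (div_nonneg (sub_nonneg.2 hrb) hab.le) (div_nonneg (by linarith : 0 ≤ r + a) hab.le)
    (by field_simp; ring)
  have e : ((b - r) / (a + b)) • (-a) + ((r + a) / (a + b)) • b = r := by
    simp only [smul_eq_mul]; field_simp; ring
  rw [e] at h
  have e2 : ((b - r) / (a + b)) • φ (-a) + ((r + a) / (a + b)) • φ b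
      = φ (-a) + (φ b - φ (-a)) / (a + b) * a + (φ b - φ (-a)) / (a + b) * r := by
    simp only [smul_eq_mul]; field_simp; ring
  linarith

theorem stmt_16 (g : ℝ → ℝ) (hconv : ConvexOn ℝ Set.univ g) (hcont : Continuous g)
    (S₀ ζd ζu q : ℝ) (hS₀ : 0 < S₀) (hζd : 0 < ζd) (hζu : 0 < ζu)
    (hq : q ∈ Set.Ioo (0 : ℝ) 1)
    (ν : Measure ℝ) (hν : IsProbabilityMeasure ν)
    (hbdd : ∃ K : Set ℝ, Bornology.IsBounded K ∧ ν K = 1)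
    (hm₁ : -ζu * (1 - q) ≤ q * ∫ y, y ∂ν) (hm₂ : q * ∫ y, y ∂ν ≤ ζd * (1 - q)) :
    (⨅ Δ : ℝ, ⨆ r : Set.Icc (-ζd) ζu,
        ((1 - q) * (g (S₀ * (1 + (r : ℝ))) - Δ * (r : ℝ)) +
          q * ∫ y, (g (S₀ * (1 + y)) - Δ * y) ∂ν)) =
      (1 - q) *
        (((ζu + q * (∫ y, y ∂ν) / (1 - q)) / (ζd + ζu)) * g (S₀ * (1 - ζd)) +
          ((ζd - q * (∫ y, y ∂ν) / (1 - q)) / (ζd + ζu)) * g (S₀ * (1 + ζu))) +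
        q * ∫ y, g (S₀ * (1 + y)) ∂ν := by
  obtain ⟨hq0, hq1⟩ := hq
  obtain ⟨K, hK, hνK⟩ := hbdd
  have hp : 0 < 1 - q := sub_pos.2 hq1
  have hs : 0 < ζd + ζu := add_pos hζd hζu
  have hφc : Continuous fun r : ℝ => g (S₀ * (1 + r)) := by fun_prop
  have hφ : ConvexOn ℝ Set.univ fun r : ℝ => g (S₀ * (1 + r)) := by
    refine ⟨convex_univ, fun x _ y _ a b ha hb hab => ?_⟩
    have h := hconv.2 (Set.mem_univ (S₀ * (1 + x))) (Set.mem_univ (S₀ * (1 + y))) ha hb hab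
    have e : a • (S₀ * (1 + x)) + b • (S₀ * (1 + y)) = S₀ * (1 + (a • x + b • y)) := by
      simp only [smul_eq_mul]; linear_combination S₀ * hab
    rw [e] at h
    exact h
  have hint : ∀ Δ : ℝ, ∫ y, (g (S₀ * (1 + y)) - Δ * y) ∂ν
      = (∫ y, g (S₀ * (1 + y)) ∂ν) - Δ * ∫ y, y ∂ν := by
    intro Δ
    rw [integral_sub (integrable_of_bounded_support hK hνK hφc)
      (integrable_of_bounded_support hK hνK (by fun_prop)), integral_const_mul]
  simp only [hint]
  generalize (∫ y, g (S₀ * (1 + y)) ∂ν) = G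
  generalize (∫ y, y ∂ν) = m at hm₁ hm₂ ⊢
  have hchord := fun {r : ℝ} => le_chord (r := r) hφ hs
  simp only [← sub_eq_add_neg] at hchord
  generalize hA : g (S₀ * (1 - ζd)) = A at hchord ⊢
  generalize hB : g (S₀ * (1 + ζu)) = B at hchord ⊢
  have hw₁ : 0 ≤ (ζu + q * m / (1 - q)) / (ζd + ζu) := by
    refine div_nonneg ?_ hs.le
    have : -ζu ≤ q * m / (1 - q) := (le_div_iff₀ hp).2 hm₁
    linarith
  have hw₂ : 0 ≤ (ζd - q * m / (1 - q)) / (ζd + ζu) := by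
    refine div_nonneg ?_ hs.le
    have : q * m / (1 - q) ≤ ζd := (div_le_iff₀ hp).2 hm₂
    linarith
  have hsum : (ζu + q * m / (1 - q)) / (ζd + ζu) + (ζd - q * m / (1 - q)) / (ζd + ζu) = 1 := by
    field_simp; ring
  -- The two-point law has mean `-q m / (1 - q)`, so the terms in `Δ` cancel.
  have hmean : (1 - q) * ((ζu + q * m / (1 - q)) / (ζd + ζu) * (-ζd)
      + (ζd - q * m / (1 - q)) / (ζd + ζu) * ζu) = -(q * m) := by
    field_simp; ring
  have hchord_val : (1 - q) * ((ζu + q * m / (1 - q)) / (ζd + ζu) * A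
      + (ζd - q * m / (1 - q)) / (ζd + ζu) * B)
      = (1 - q) * (A + (B - A) / (ζd + ζu) * ζd) - q * ((B - A) / (ζd + ζu) * m) := by
    field_simp; ring
  have hlower : ∀ Δ : ℝ, (1 - q) * ((ζu + q * m / (1 - q)) / (ζd + ζu) * A
      + (ζd - q * m / (1 - q)) / (ζd + ζu) * B) + q * G
      ≤ ⨆ r : Set.Icc (-ζd) ζu,
        ((1 - q) * (g (S₀ * (1 + (r : ℝ))) - Δ * (r : ℝ)) + q * (G - Δ * m)) := by
    intro Δ
    have hb : BddAbove (Set.range fun r : Set.Icc (-ζd) ζu =>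
        ((1 - q) * (g (S₀ * (1 + (r : ℝ))) - Δ * (r : ℝ)) + q * (G - Δ * m))) :=
      (isCompact_range (by fun_prop)).bddAbove
    have h1 := le_ciSup hb ⟨-ζd, le_refl _, by linarith⟩
    have h2 := le_ciSup hb ⟨ζu, by linarith, le_refl _⟩
    simp only [← sub_eq_add_neg, hA, hB] at h1 h2
    generalize (⨆ r : Set.Icc (-ζd) ζu,
        ((1 - q) * (g (S₀ * (1 + (r : ℝ))) - Δ * (r : ℝ)) + q * (G - Δ * m))) = M at h1 h2 ⊢
    generalize (ζu + q * m / (1 - q)) / (ζd + ζu) = w₁ at *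
    generalize (ζd - q * m / (1 - q)) / (ζd + ζu) = w₂ at *
    have h3 := add_le_add (mul_le_mul_of_nonneg_left h1 hw₁) (mul_le_mul_of_nonneg_left h2 hw₂)
    linear_combination h3 + (M - q * (G - Δ * m)) * hsum + Δ * hmean
  refine le_antisymm ?_ (le_ciInf hlower)
  have : Nonempty (Set.Icc (-ζd) ζu) := ⟨⟨0, by linarith, hζu.le⟩⟩
  refine (ciInf_le ⟨_, Set.forall_mem_range.2 hlower⟩ ((B - A) / (ζd + ζu))).trans
    (ciSup_le fun r => ?_)
  have h := mul_le_mul_of_nonneg_left (hchord r.2.1 r.2.2) hp.le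
  rw [hchord_val]
  linarith
end
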